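/- arXiv:1108.1878 — 4 statements merged into one kernel-verified Lean document; each statement's English description precedes it below -/
import Mathlib

section
/- Let ξ ∈ ℝ satisfy |a| < |ξ| < 1 and suppose a sequence of integers {y_n} satisfies y_n = nξ + O(1) as n → ∞. Then there exists a smooth non-negative function G on {η : |a| < |η| < 1} (depending on A and φ but not on n) such that p_n(φ; y_n) = ((1 + (−1)^{n+y_n})|b| / (π n (1 − ξ²)√(ξ² − |a|²))) · e^{−n H_Q(ξ_n)} · (G(ξ) + O(1/n)) as n → ∞, where ξ_n = y_n/n. -/
/-!
After `l` steps to the right and `m` to the left, the components of the walk are, up to explicit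
powers of `a` and `conj a`, coefficients of `(1 - s X)ˡ (1 + X)ᵐ (φ₂ - (conj b / a) φ₁ X)` with
`s = |b|² / |a|²`, because these polynomials satisfy the recursion of the walk. The linear factors
`1 - s X` and `1 + X` are real, and for velocities in the hidden region the two saddle points of
the coefficient integral are real as well. Rescaling `X` to the saddle point `-ρ` turns the product
into the generating polynomial of a sum of independent Bernoulli variables of positive variance,
the parameters of one of the two kinds being negative. By
`|1 + p (exp (iθ) - 1)|² = 1 - 2 p (1 - p) (1 - cos θ)` the variance alone controls the decay of
the characteristic function, so the local limit theorem with error `O(1/n)` holds for such signed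
variables too. The rescaling costs an exponential which is linear in
`n` and `y`; since the saddle point is stationary, it is the first-order Taylor polynomial at `ξ`
of `n H_Q(y / n)`, and the remainder is `O(1/n)` because `y / n - ξ = O(1/n)`. Negative velocities
follow from the reflection symmetry of the walk.
-/

open Filter Topology Asymptotics MeasureTheory

noncomputable section

/-- One step of the (column-decomposition) quantum walk `U` on functions `ℤ → ℂ²`:
`(Uf)(x) = P f(x+1) + Q f(x-1)` with `P = [[a,0],[-conj b,0]]`, `Q = [[0,b],[0,conj a]]`. -/
def qwStep (a b : ℂ) (f : ℤ → ℂ × ℂ) : ℤ → ℂ × ℂ := fun x =>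
  (a * (f (x + 1)).1 + b * (f (x - 1)).2,
   -(starRingEnd ℂ) b * (f (x + 1)).1 + (starRingEnd ℂ) a * (f (x - 1)).2)

/-- `δ₀ ⊗ φ : ℤ → ℂ²`. -/
def qwDelta (φ : ℂ × ℂ) : ℤ → ℂ × ℂ := fun x => if x = 0 then φ else 0

/-- Squared norm of a vector in `ℂ²`. -/
def nsq (u : ℂ × ℂ) : ℝ := ‖u.1‖ ^ 2 + ‖u.2‖ ^ 2

/-- Transition probability `p_n(φ; y) = ‖(Uⁿ(δ₀ ⊗ φ))(y)‖²`. -/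
def qwP (a b : ℂ) (φ : ℂ × ℂ) (n : ℕ) (y : ℤ) : ℝ :=
  nsq (((qwStep a b)^[n] (qwDelta φ)) y)

/-- `λ_A(φ) = |φ₂|² − |φ₁|² + (1/|a|²)(ab conj(φ₁)φ₂ + conj(ab) φ₁ conj(φ₂))` (a real number). -/
def lamA (a b : ℂ) (φ : ℂ × ℂ) : ℝ :=
  ‖φ.2‖ ^ 2 - ‖φ.1‖ ^ 2 +
    (a * b * (starRingEnd ℂ) φ.1 * φ.2 +
      (starRingEnd ℂ) a * (starRingEnd ℂ) b * φ.1 * (starRingEnd ℂ) φ.2).re / ‖a‖ ^ 2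

/-- `μ(t) = arccos(|a| cos t)`. -/
def muF (a : ℂ) (t : ℝ) : ℝ := Real.arccos (‖a‖ * Real.cos t)

/-- `t(η) = arcsin(|b|η/(|a|√(1 − η²)))`. -/
def tF (a b : ℂ) (η : ℝ) : ℝ := Real.arcsin (‖b‖ * η / (‖a‖ * Real.sqrt (1 - η ^ 2)))

/-- `θ(η) = 2μ(t(η)) − 2η t(η)`. -/
def thetaF (a b : ℂ) (η : ℝ) : ℝ := 2 * muF a (tF a b η) - 2 * η * tF a b η

/-- The rate function `H_Q(ξ)` on `|a| < |ξ| < 1`. -/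
def HQ (a b : ℂ) (ξ : ℝ) : ℝ :=
  2 * |ξ| * Real.log (‖b‖ * |ξ| + Real.sqrt (ξ ^ 2 - ‖a‖ ^ 2)) -
    2 * Real.log (‖b‖ + Real.sqrt (ξ ^ 2 - ‖a‖ ^ 2)) +
    (1 - |ξ|) * Real.log (1 - ξ ^ 2) - 2 * |ξ| * Real.log ‖a‖

open Complex Polynomial
open scoped Real

/-! ### Big-O calculus -/

lemma isBigO_comp_sub_of_differentiableAt {α E F G : Type*} [NormedAddCommGroup E]
    [NormedSpace ℝ E] [NormedAddCommGroup F] [NormedSpace ℝ F] [NormedAddCommGroup G]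
    {l : Filter α} {f : E → F} {x : E} {u : α → E} {g : α → G} (hf : DifferentiableAt ℝ f x)
    (hg : Tendsto g l (𝓝 0)) (hu : (fun n => u n - x) =O[l] g) :
    (fun n => f (u n) - f x) =O[l] g :=
  (hf.isBigO_sub.comp_tendsto (tendsto_sub_nhds_zero_iff.mp (hu.trans_tendsto hg))).trans hu

lemma taylorWithinEval_isBigO {E : Type*} [NormedAddCommGroup E] [NormedSpace ℝ E] {f : ℝ → E}
    {x₀ : ℝ} {n : ℕ} {s : Set ℝ} (hs : Convex ℝ s) (hx₀ : x₀ ∈ s) (hf : ContDiffOn ℝ (n + 1) f s) :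
    (fun x => f x - taylorWithinEval f n s x₀ x) =O[𝓝[s] x₀] fun x => (x - x₀) ^ (n + 1) := by
  have hlast : (fun x => (((n + 1 : ℝ) * n.factorial)⁻¹ * (x - x₀) ^ (n + 1)) •
      iteratedDerivWithin (n + 1) f s x₀) =O[𝓝[s] x₀] fun x => (x - x₀) ^ (n + 1) :=
    .of_bound (‖((n + 1 : ℝ) * n.factorial)⁻¹‖ * ‖iteratedDerivWithin (n + 1) f s x₀‖) <|
      .of_forall fun x => by rw [norm_smul, norm_mul]; exact (by ring : _ = _).le
  refine ((taylor_isLittleO hs hx₀ (by exact_mod_cast hf)).isBigO.add hlast).congr_left fun x => ?_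
  rw [taylorWithinEval_succ]
  abel

lemma isBigO_sub_sub_mul_of_hasDerivAt {f : ℝ → ℝ} {f' x₀ : ℝ} (hf : ContDiffAt ℝ 2 f x₀)
    (hf' : HasDerivAt f f' x₀) :
    (fun x => f x - f x₀ - (x - x₀) * f') =O[𝓝 x₀] fun x => (x - x₀) ^ 2 := by
  obtain ⟨s, hs, hfs⟩ := hf.contDiffOn (m := 2) le_rfl (by simp)
  obtain ⟨ε, hε, hball⟩ := Metric.mem_nhds_iff.mp (mem_of_superset (by simpa using hs) subset_rfl)
  have hx₀ : x₀ ∈ Metric.ball x₀ ε := Metric.mem_ball_self hε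
  have key := taylorWithinEval_isBigO (n := 1) (convex_ball x₀ ε) hx₀
    (by norm_num; exact hfs.mono hball)
  rw [Metric.isOpen_ball.nhdsWithin_eq hx₀] at key
  refine key.congr_left fun x => ?_
  rw [taylorWithinEval_succ, taylor_within_zero_eval, iteratedDerivWithin_one,
    hf'.hasDerivWithinAt.derivWithin (Metric.isOpen_ball.uniqueDiffWithinAt hx₀)]
  simp only [CharP.cast_eq_zero, zero_add, Nat.factorial_zero, Nat.cast_one, mul_one, inv_one,
    pow_one, one_mul, smul_eq_mul]
  ring

/-! ### The Bernoulli characteristic function -/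

/-- The characteristic function of a Bernoulli variable of parameter `p`; the parameter is any
real number, so the underlying measure on `{0, 1}` may be signed. -/
def bernoulliChar (p θ : ℝ) : ℂ := 1 + p * (exp (θ * I) - 1)

lemma bernoulliChar_re (p θ : ℝ) : (bernoulliChar p θ).re = 1 + p * (Real.cos θ - 1) := by
  simp [bernoulliChar, exp_ofReal_mul_I_re]

lemma bernoulliChar_im (p θ : ℝ) : (bernoulliChar p θ).im = p * Real.sin θ := by
  simp [bernoulliChar, exp_ofReal_mul_I_im]

lemma continuous_bernoulliChar (p : ℝ) : Continuous (bernoulliChar p) := by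
  unfold bernoulliChar
  fun_prop

lemma norm_bernoulliChar_sq (p θ : ℝ) :
    ‖bernoulliChar p θ‖ ^ 2 = 1 - 2 * (p * (1 - p)) * (1 - Real.cos θ) := by
  rw [← normSq_eq_norm_sq, normSq_apply, bernoulliChar_re, bernoulliChar_im]
  linear_combination p ^ 2 * Real.sin_sq_add_cos_sq θ

lemma one_sub_cos_sub_isBigO :
    (fun θ : ℝ => 1 - Real.cos θ - θ ^ 2 / 2) =O[𝓝 0] fun θ => θ ^ 4 :=
  .of_bound (5 / 96) <| by
    filter_upwards [Metric.closedBall_mem_nhds (0 : ℝ) one_pos] with θ hθ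
    rw [mem_closedBall_zero_iff, Real.norm_eq_abs] at hθ
    rw [norm_pow, Real.norm_eq_abs, Real.norm_eq_abs, abs_sub_comm, mul_comm]
    convert Real.cos_bound hθ using 2
    ring

lemma one_sub_cos_isBigO : (fun θ : ℝ => 1 - Real.cos θ) =O[𝓝 0] fun θ => θ ^ 2 := by
  refine (isBigO_sub_sub_mul_of_hasDerivAt Real.contDiff_cos.contDiffAt
    (Real.hasDerivAt_cos 0)).neg_left.congr (fun θ => ?_) (fun θ => ?_) <;> simp

lemma sin_sub_self_isBigO : (fun θ : ℝ => Real.sin θ - θ) =O[𝓝 0] fun θ => θ ^ 3 :=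
  .of_bound 1 <| by
    filter_upwards [Metric.closedBall_mem_nhds (0 : ℝ) one_pos] with θ hθ
    rw [mem_closedBall_zero_iff, Real.norm_eq_abs] at hθ
    have hθ2 : |θ| ^ 5 ≤ |θ| ^ 3 := pow_le_pow_of_le_one (abs_nonneg θ) hθ (by norm_num)
    rw [norm_pow, Real.norm_eq_abs, Real.norm_eq_abs]
    calc |Real.sin θ - θ| = |Real.sin θ - (θ - θ ^ 3 / 6) - θ ^ 3 / 6| := by ring_nf
      _ ≤ |θ| ^ 5 / 100 + |θ| ^ 3 / 6 := by
        refine (abs_sub _ _).trans (add_le_add (Real.sin_bound hθ) ?_)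
        rw [abs_div, abs_pow, abs_of_pos (by norm_num : (0 : ℝ) < 6)]
      _ ≤ 1 * |θ| ^ 3 := by linarith [pow_nonneg (abs_nonneg θ) 3]

lemma log_norm_bernoulliChar_isBigO (p : ℝ) :
    (fun θ => Real.log ‖bernoulliChar p θ‖ + p * (1 - p) * θ ^ 2 / 2) =O[𝓝 0]
      fun θ => θ ^ 4 := by
  set q := p * (1 - p)
  have hlin : (fun θ => ‖bernoulliChar p θ‖ ^ 2 - 1) =O[𝓝 0] fun θ : ℝ => θ ^ 2 :=
    (one_sub_cos_isBigO.const_mul_left (-(2 * q))).congr_left fun θ => by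
      rw [norm_bernoulliChar_sq]
      ring
  have hone : Tendsto (fun θ => ‖bernoulliChar p θ‖ ^ 2) (𝓝 0) (𝓝 1) := by
    have : Continuous fun θ => ‖bernoulliChar p θ‖ ^ 2 := (continuous_bernoulliChar p).norm.pow 2
    simpa [bernoulliChar] using this.tendsto 0
  have hlog := ((isBigO_sub_sub_mul_of_hasDerivAt (Real.contDiffAt_log.mpr one_ne_zero)
    (Real.hasDerivAt_log one_ne_zero)).comp_tendsto hone).trans (hlin.pow 2)
  simp only [← pow_mul] at hlog
  refine ((hlog.const_mul_left 2⁻¹).sub (one_sub_cos_sub_isBigO.const_mul_left q)).congr_left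
    fun θ => ?_
  simp only [Function.comp_apply, Real.log_pow, Real.log_one]
  rw [norm_bernoulliChar_sq]
  push_cast
  ring

lemma arg_bernoulliChar_isBigO (p : ℝ) :
    (fun θ => arg (bernoulliChar p θ) - p * θ) =O[𝓝 0] fun θ => θ ^ 3 := by
  set w : ℝ → ℂ := fun θ => p * (exp (θ * I) - 1)
  have hw0 : Tendsto w (𝓝 0) (𝓝 0) := by
    have : Continuous w := by fun_prop
    simpa [w] using this.tendsto 0
  have hw : w =O[𝓝 0] fun θ : ℝ => θ := by
    have : DifferentiableAt ℝ w 0 := by fun_prop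
    simpa [w] using this.isBigO_sub
  have hlog : (fun θ => (log (1 + w θ) - logTaylor 3 (w θ)).im) =O[𝓝 0] fun θ : ℝ => θ ^ 3 :=
    (isBigO_of_le _ fun θ => abs_im_le_norm _).trans
      (((log_sub_logTaylor_isBigO 2).comp_tendsto hw0).trans (hw.pow 3))
  have hsin : Real.sin =O[𝓝 0] fun θ : ℝ => θ := by
    simpa using (Real.differentiableAt_sin (x := 0)).isBigO_sub
  have hquad : (fun θ : ℝ => (1 - Real.cos θ) * Real.sin θ) =O[𝓝 0] fun θ => θ ^ 3 := by
    simpa only [← pow_succ] using one_sub_cos_isBigO.mul hsin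
  refine ((hlog.add (sin_sub_self_isBigO.const_mul_left p)).add
    (hquad.const_mul_left (p ^ 2))).congr_left fun θ => ?_
  have him : (w θ).im = p * Real.sin θ := by simp [w, exp_ofReal_mul_I_im]
  have hre : (w θ).re = p * (Real.cos θ - 1) := by simp [w, exp_ofReal_mul_I_re]
  have htaylor : (logTaylor 3 (w θ)).im = (w θ).im - (w θ).re * (w θ).im := by
    have : logTaylor 3 (w θ) = w θ - w θ ^ 2 / (2 : ℝ) := by
      simp only [logTaylor_succ, logTaylor_zero, zero_add, pow_one, pow_zero, mul_one,
        CharP.cast_eq_zero, div_zero, Nat.reduceAdd, even_two, Even.neg_pow, one_pow, one_mul,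
        Nat.cast_one, div_one, Nat.cast_ofNat, Pi.add_apply, add_zero, ofReal_ofNat]
      ring
    rw [this, sub_im, div_ofReal_im, sq, mul_im (w θ) (w θ)]
    ring
  rw [sub_im, htaylor, log_im, hre, him]
  change arg (bernoulliChar p θ) - _ + _ + _ = _
  ring

lemma exists_eventually_cumulant_le {ι : Type*} [Finite ι] (p : ι → ℝ) :
    ∃ K, 0 ≤ K ∧ ∀ᶠ θ in 𝓝 (0 : ℝ), ∀ i, bernoulliChar (p i) θ ≠ 0 ∧
      |Real.log ‖bernoulliChar (p i) θ‖ + p i * (1 - p i) * θ ^ 2 / 2| ≤ K * θ ^ 4 ∧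
      |arg (bernoulliChar (p i) θ) - p i * θ| ≤ K * |θ| ^ 3 := by
  have := Fintype.ofFinite ι
  obtain ⟨K₁, hK₁⟩ := (isBigO_pi.mpr fun i => log_norm_bernoulliChar_isBigO (p i)).bound
  obtain ⟨K₂, hK₂⟩ := (isBigO_pi.mpr fun i => arg_bernoulliChar_isBigO (p i)).bound
  have hne : ∀ᶠ θ in 𝓝 (0 : ℝ), ∀ i, bernoulliChar (p i) θ ≠ 0 :=
    eventually_all.mpr fun i => (continuous_bernoulliChar (p i)).continuousAt.eventually_ne
      (by simp [bernoulliChar])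
  refine ⟨max 0 (max K₁ K₂), le_max_left _ _, ?_⟩
  filter_upwards [hK₁, hK₂, hne] with θ h₁ h₂ hne i
  refine ⟨hne i, ?_, ?_⟩
  · calc _ ≤ _ := norm_le_pi_norm (fun i => Real.log ‖bernoulliChar (p i) θ‖ +
        p i * (1 - p i) * θ ^ 2 / 2) i
      _ ≤ K₁ * ‖θ ^ 4‖ := h₁
      _ ≤ _ := by
        rw [norm_pow, Real.norm_eq_abs, (by decide : Even 4).pow_abs]
        gcongr
        exact (le_max_left _ _).trans (le_max_right _ _)
  · calc _ ≤ _ := norm_le_pi_norm (fun i => arg (bernoulliChar (p i) θ) - p i * θ) i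
      _ ≤ K₂ * ‖θ ^ 3‖ := h₂
      _ ≤ _ := by
        rw [norm_pow, Real.norm_eq_abs]
        gcongr
        exact (le_max_right _ _).trans (le_max_right _ _)

/-! ### The local limit theorem for signed Bernoulli sums -/

lemma coeff_eq_intervalIntegral (P : ℂ[X]) (N : ℕ) :
    P.coeff N =
      (2 * π : ℝ)⁻¹ • ∫ θ in -π..π, P.eval (exp (θ * I)) * exp (-(N * θ : ℝ) * I) := by
  have : Fact (0 < 2 * π) := ⟨Real.two_pi_pos⟩
  rw [← fourierCoeff_toAddCircle_natCast, fourierCoeff_eq_intervalIntegral _ _ (-π),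
    show -π + 2 * π = π by ring, one_div]
  congr! 3 with θ
  have hexp : exp (-(N * θ : ℝ) * I) = fourier (-(N : ℤ)) (θ : AddCircle (2 * π)) := by
    rw [fourier_coe_apply]
    congr 1
    push_cast
    field_simp
  have heval : P.toAddCircle (θ : AddCircle (2 * π)) = P.eval (exp (θ * I)) := by
    rw [toAddCircle, aeval_continuousMap_apply]
    simp [AddCircle.toCircle_apply_mk]
  rw [hexp, heval, smul_eq_mul, mul_comm]

lemma abs_exp_sub_exp_le {x y c : ℝ} (hx : x ≤ c) (hy : y ≤ c) :
    |Real.exp x - Real.exp y| ≤ Real.exp c * |x - y| := by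
  wlog hxy : y ≤ x generalizing x y
  · rw [abs_sub_comm, abs_sub_comm x y]
    exact this hy hx (le_of_not_ge hxy)
  rw [abs_of_nonneg (sub_nonneg.mpr (Real.exp_le_exp.mpr hxy)), abs_of_nonneg (sub_nonneg.mpr hxy)]
  calc Real.exp x - Real.exp y = Real.exp x * (1 - Real.exp (y - x)) := by
        rw [mul_sub, mul_one, ← Real.exp_add, add_sub_cancel]
    _ ≤ Real.exp x * (x - y) := by
        refine mul_le_mul_of_nonneg_left ?_ (Real.exp_pos x).le
        linarith [Real.add_one_le_exp (y - x)]
    _ ≤ Real.exp c * (x - y) := by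
        gcongr

/-- The profile of the error in the Gaussian approximation of a Bernoulli characteristic function,
in terms of `t = V θ²` with `V` the variance. -/
def gaussianErrorProfile (t : ℝ) : ℝ := (t + t ^ 2 + t ^ 3) * Real.exp (-(2 / π ^ 2 * t))

lemma integrable_gaussianErrorProfile_sq :
    Integrable fun x : ℝ => gaussianErrorProfile (x ^ 2) := by
  have hmoment (k : ℕ) : Integrable fun x : ℝ => x ^ k * Real.exp (-(2 / π ^ 2) * x ^ 2) := by
    simpa only [Real.rpow_natCast] using integrable_rpow_mul_exp_neg_mul_sq
      (by positivity : (0 : ℝ) < 2 / π ^ 2) (by linarith [k.cast_nonneg (α := ℝ)] : (-1 : ℝ) < k)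
  refine (((hmoment 2).add (hmoment 4)).add (hmoment 6)).congr (.of_forall fun x => ?_)
  simp only [Pi.add_apply, gaussianErrorProfile]
  ring_nf

lemma two_div_pi_sq_le_half : 2 / π ^ 2 ≤ (1 : ℝ) / 2 := by
  rw [div_le_div_iff₀ (by positivity) two_pos]
  nlinarith [Real.pi_gt_three]

section LocalLimit

variable {ι : Type*} [Fintype ι] (p : ι → ℝ) (L : ι → ℕ)

/-- The generating polynomial of a sum of independent Bernoulli variables, `L i` of them of
(possibly signed) parameter `p i`. -/
def bernoulliGen : ℝ[X] := ∏ i, (C (1 - p i) + C (p i) * X) ^ L i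

/-- The mean of the sum of Bernoulli variables generated by `bernoulliGen p L`. -/
def bernoulliMean : ℝ := ∑ i, L i * p i

/-- The variance of the sum of Bernoulli variables generated by `bernoulliGen p L`. -/
def bernoulliVar : ℝ := ∑ i, L i * (p i * (1 - p i))

/-- The Fourier integrand of the `N`-th coefficient of `bernoulliGen p L`. -/
def bernoulliIntegrand (N : ℕ) (θ : ℝ) : ℝ :=
  ((∏ i, bernoulliChar (p i) θ ^ L i) * exp (-(N * θ : ℝ) * I)).re

lemma continuous_bernoulliIntegrand (N : ℕ) : Continuous (bernoulliIntegrand p L N) := by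
  have := fun i => continuous_bernoulliChar (p i)
  unfold bernoulliIntegrand
  fun_prop

lemma coeff_bernoulliGen (N : ℕ) :
    (bernoulliGen p L).coeff N = (2 * π)⁻¹ * ∫ θ in -π..π, bernoulliIntegrand p L N θ := by
  have hint : IntervalIntegrable (fun θ : ℝ => (∏ i, bernoulliChar (p i) θ ^ L i) *
      exp (-(N * θ : ℝ) * I)) volume (-π) π := by
    have := fun i => continuous_bernoulliChar (p i)
    exact (by fun_prop : Continuous _).intervalIntegrable _ _
  have heval (θ : ℝ) : ((bernoulliGen p L).map ofRealHom).eval (exp (θ * I)) =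
      ∏ i, bernoulliChar (p i) θ ^ L i := by
    simp only [bernoulliGen, Polynomial.map_prod, Polynomial.map_pow, Polynomial.map_add,
      Polynomial.map_mul, map_C, map_X, eval_prod, eval_pow, eval_add, eval_mul, eval_C, eval_X,
      bernoulliChar, ofRealHom_eq_coe]
    push_cast
    congr! 2
    ring
  have hcoeff := coeff_eq_intervalIntegral ((bernoulliGen p L).map ofRealHom) N
  simp only [heval] at hcoeff
  rw [coeff_map, real_smul] at hcoeff
  have hre := congrArg re hcoeff
  rw [re_ofReal_mul, ← reCLM_apply (∫ _ in _.._, _), ← reCLM.intervalIntegral_comp_comm hint] at hre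
  exact hre

lemma bernoulliIntegrand_eq (N : ℕ) (θ : ℝ) :
    bernoulliIntegrand p L N θ = (∏ i, ‖bernoulliChar (p i) θ‖ ^ L i) *
      Real.cos (∑ i, L i * arg (bernoulliChar (p i) θ) - N * θ) := by
  have hpolar : ∏ i, bernoulliChar (p i) θ ^ L i =
      (∏ i, ‖bernoulliChar (p i) θ‖ ^ L i : ℝ) *
        exp ((∑ i, L i * arg (bernoulliChar (p i) θ) : ℝ) * I) := by
    push_cast
    rw [Finset.sum_mul, exp_sum, ← Finset.prod_mul_distrib]
    refine Finset.prod_congr rfl fun i _ => ?_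
    rw [mul_assoc, exp_nat_mul, ← mul_pow, norm_mul_exp_arg_mul_I]
  rw [bernoulliIntegrand, hpolar, mul_assoc, ← exp_add, ← add_mul, ← ofReal_neg, ← ofReal_add,
    re_ofReal_mul, exp_ofReal_mul_I_re, sub_eq_add_neg]

variable {L}

lemma prod_norm_bernoulliChar_le (hV : 0 ≤ bernoulliVar p L) {θ : ℝ} (hθ : |θ| ≤ π) :
    ∏ i, ‖bernoulliChar (p i) θ‖ ^ L i ≤ Real.exp (-(2 / π ^ 2 * (bernoulliVar p L * θ ^ 2))) := by
  have hfactor (i : ι) : ‖bernoulliChar (p i) θ‖ ≤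
      Real.exp (-(p i * (1 - p i)) * (1 - Real.cos θ)) := by
    refine le_of_sq_le_sq ?_ (Real.exp_pos _).le
    rw [norm_bernoulliChar_sq, ← Real.exp_nat_mul]
    refine le_trans (le_of_eq ?_) (Real.add_one_le_exp _)
    push_cast
    ring
  calc ∏ i, ‖bernoulliChar (p i) θ‖ ^ L i
      ≤ ∏ i, Real.exp (-(p i * (1 - p i)) * (1 - Real.cos θ)) ^ L i := by
        gcongr with i
        exact hfactor i
    _ = Real.exp (-(bernoulliVar p L * (1 - Real.cos θ))) := by
        simp only [← Real.exp_nat_mul, ← Real.exp_sum, bernoulliVar, Finset.sum_mul, neg_mul,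
          mul_neg, Finset.sum_neg_distrib, mul_assoc]
    _ ≤ _ := by
        have hcos : 2 / π ^ 2 * θ ^ 2 ≤ 1 - Real.cos θ := by
          linarith [Real.cos_le_one_sub_mul_cos_sq hθ]
        rw [Real.exp_le_exp]
        linarith [mul_le_mul_of_nonneg_left hcos hV]

variable {N : ℕ} {K A D θ : ℝ}

lemma abs_sum_nat_mul_sub_le {x y : ι → ℝ} {δ : ℝ} (hxy : ∀ i, |x i - y i| ≤ δ) :
    |∑ i, L i * x i - ∑ i, L i * y i| ≤ (∑ i, (L i : ℝ)) * δ := by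
  rw [← Finset.sum_sub_distrib, Finset.sum_mul]
  refine (Finset.abs_sum_le_sum_abs _ _).trans (Finset.sum_le_sum fun i _ => ?_)
  rw [← mul_sub, abs_mul, Nat.abs_cast]
  exact mul_le_mul_of_nonneg_left (hxy i) (Nat.cast_nonneg _)

lemma abs_prod_norm_bernoulliChar_sub_le (hθ : |θ| ≤ π) (hV : 0 ≤ bernoulliVar p L)
    (hne : ∀ i, bernoulliChar (p i) θ ≠ 0)
    (hlog : ∀ i, |Real.log ‖bernoulliChar (p i) θ‖ + p i * (1 - p i) * θ ^ 2 / 2| ≤ K * θ ^ 4)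
    (hK : 0 ≤ K) (hL : ∑ i, (L i : ℝ) ≤ A * bernoulliVar p L) :
    |∏ i, ‖bernoulliChar (p i) θ‖ ^ L i - Real.exp (-(bernoulliVar p L * θ ^ 2 / 2))| ≤
      Real.exp (-(2 / π ^ 2 * (bernoulliVar p L * θ ^ 2))) *
        (A * bernoulliVar p L * (K * θ ^ 4)) := by
  have hprod : ∏ i, ‖bernoulliChar (p i) θ‖ ^ L i =
      Real.exp (∑ i, L i * Real.log ‖bernoulliChar (p i) θ‖) := by
    rw [Real.exp_sum]
    refine Finset.prod_congr rfl fun i _ => ?_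
    rw [Real.exp_nat_mul, Real.exp_log (norm_pos_iff.mpr (hne i))]
  have hgauss : -(bernoulliVar p L * θ ^ 2 / 2) = ∑ i, L i * (-(p i * (1 - p i) * θ ^ 2 / 2)) := by
    simp only [bernoulliVar, Finset.sum_mul, Finset.sum_div, ← Finset.sum_neg_distrib]
    exact Finset.sum_congr rfl fun i _ => by ring
  have hle := prod_norm_bernoulliChar_le p hV hθ
  rw [hprod] at hle ⊢
  have hle' : -(bernoulliVar p L * θ ^ 2 / 2) ≤ -(2 / π ^ 2 * (bernoulliVar p L * θ ^ 2)) := by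
    nlinarith [mul_le_mul_of_nonneg_right two_div_pi_sq_le_half (mul_nonneg hV (sq_nonneg θ))]
  refine (abs_exp_sub_exp_le (Real.exp_le_exp.mp hle) hle').trans ?_
  gcongr
  rw [hgauss]
  refine (abs_sum_nat_mul_sub_le fun i => ?_).trans
    (mul_le_mul_of_nonneg_right hL (by positivity : 0 ≤ K * θ ^ 4))
  rw [sub_neg_eq_add]
  exact hlog i

lemma sq_phase_le (hK : 0 ≤ K)
    (harg : ∀ i, |arg (bernoulliChar (p i) θ) - p i * θ| ≤ K * |θ| ^ 3)
    (hL : ∑ i, (L i : ℝ) ≤ A * bernoulliVar p L) (hN : |bernoulliMean p L - N| ≤ D) :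
    (∑ i, L i * arg (bernoulliChar (p i) θ) - N * θ) ^ 2 / 2 ≤
      (D * |θ|) ^ 2 + (A * bernoulliVar p L * (K * |θ| ^ 3)) ^ 2 := by
  have hsum : |∑ i, L i * arg (bernoulliChar (p i) θ) - ∑ i, L i * (p i * θ)| ≤
      A * bernoulliVar p L * (K * |θ| ^ 3) :=
    (abs_sum_nat_mul_sub_le harg).trans (mul_le_mul_of_nonneg_right hL (by positivity))
  have hcentre : |∑ i, L i * (p i * θ) - N * θ| ≤ D * |θ| := by
    have : ∑ i, L i * (p i * θ) - N * θ = (bernoulliMean p L - N) * θ := by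
      simp only [bernoulliMean, sub_mul, Finset.sum_mul, mul_assoc]
    rw [this, abs_mul]
    gcongr
  have h₁ := sq_le_sq' (by linarith [abs_le.mp hsum]) (abs_le.mp hsum).2
  have h₂ := sq_le_sq' (by linarith [abs_le.mp hcentre]) (abs_le.mp hcentre).2
  nlinarith [sq_nonneg ((∑ i, L i * arg (bernoulliChar (p i) θ) - ∑ i, L i * (p i * θ)) -
    (∑ i, L i * (p i * θ) - N * θ))]

lemma abs_bernoulliIntegrand_sub_le_of_near (hθ : |θ| ≤ π) (hV : 0 < bernoulliVar p L)
    (hne : ∀ i, bernoulliChar (p i) θ ≠ 0)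
    (hlog : ∀ i, |Real.log ‖bernoulliChar (p i) θ‖ + p i * (1 - p i) * θ ^ 2 / 2| ≤ K * θ ^ 4)
    (harg : ∀ i, |arg (bernoulliChar (p i) θ) - p i * θ| ≤ K * |θ| ^ 3) (hK : 0 ≤ K) (hA : 0 ≤ A)
    (hL : ∑ i, (L i : ℝ) ≤ A * bernoulliVar p L) (hN : |bernoulliMean p L - N| ≤ D) :
    |bernoulliIntegrand p L N θ - Real.exp (-(bernoulliVar p L * θ ^ 2 / 2))| ≤
      (D ^ 2 + A * K + (A * K) ^ 2) / bernoulliVar p L *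
        gaussianErrorProfile (bernoulliVar p L * θ ^ 2) := by
  rw [bernoulliIntegrand_eq]
  have hmod := abs_prod_norm_bernoulliChar_sub_le p hθ hV.le hne hlog hK hL
  have hphase := sq_phase_le p hK harg hL hN
  have hdom := prod_norm_bernoulliChar_le p hV.le hθ
  set V := bernoulliVar p L
  set R := ∏ i, ‖bernoulliChar (p i) θ‖ ^ L i
  set Ω := ∑ i, L i * arg (bernoulliChar (p i) θ) - N * θ
  set E := Real.exp (-(2 / π ^ 2 * (V * θ ^ 2))) with hE
  have hR : 0 ≤ R := Finset.prod_nonneg fun i _ => by positivity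
  have hcos : |R * Real.cos Ω - R| ≤ E * ((D * |θ|) ^ 2 + (A * V * (K * |θ| ^ 3)) ^ 2) := by
    rw [← mul_sub_one, abs_mul, abs_of_nonneg hR, abs_sub_comm,
      abs_of_nonneg (sub_nonneg.mpr (Real.cos_le_one Ω))]
    have : 1 - Real.cos Ω ≤ Ω ^ 2 / 2 := by linarith [Real.one_sub_sq_div_two_le_cos (x := Ω)]
    exact mul_le_mul hdom (this.trans hphase) (sub_nonneg.mpr (Real.cos_le_one Ω))
      (Real.exp_pos _).le
  calc |R * Real.cos Ω - Real.exp (-(V * θ ^ 2 / 2))|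
      ≤ E * ((D * |θ|) ^ 2 + (A * V * (K * |θ| ^ 3)) ^ 2) + E * (A * V * (K * θ ^ 4)) :=
        (abs_sub_le _ R _).trans (add_le_add hcos hmod)
    _ = E / V * (D ^ 2 * (V * θ ^ 2) + A * K * (V * θ ^ 2) ^ 2 +
          (A * K) ^ 2 * (V * θ ^ 2) ^ 3) := by
        rw [mul_pow D, sq_abs, show (A * V * (K * |θ| ^ 3)) ^ 2 = (A * V * K) ^ 2 * (|θ| ^ 2) ^ 3 by
          ring, sq_abs]
        field_simp
        ring
    _ ≤ E / V * ((D ^ 2 + A * K + (A * K) ^ 2) *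
          (V * θ ^ 2 + (V * θ ^ 2) ^ 2 + (V * θ ^ 2) ^ 3)) := by
        gcongr
        have ht : 0 ≤ V * θ ^ 2 := by positivity
        have hAK : 0 ≤ A * K := by positivity
        nlinarith [mul_nonneg (sq_nonneg D) (pow_nonneg ht 2),
          mul_nonneg (sq_nonneg D) (pow_nonneg ht 3), mul_nonneg hAK ht,
          mul_nonneg hAK (pow_nonneg ht 3), mul_nonneg (sq_nonneg (A * K)) ht,
          mul_nonneg (sq_nonneg (A * K)) (pow_nonneg ht 2)]
    _ = _ := by
        rw [gaussianErrorProfile, ← hE]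
        ring

variable {ε : ℝ}

lemma abs_indicator_bernoulliIntegrand_sub_le_of_far (N : ℕ) (hV : 0 < bernoulliVar p L)
    (hε : 0 < ε) (hθ : ε ≤ |θ|) :
    |(Set.Ioc (-π) π).indicator (bernoulliIntegrand p L N) θ -
        Real.exp (-(bernoulliVar p L * θ ^ 2 / 2))| ≤
      2 / ε ^ 2 / bernoulliVar p L * gaussianErrorProfile (bernoulliVar p L * θ ^ 2) := by
  have hdom : |(Set.Ioc (-π) π).indicator (bernoulliIntegrand p L N) θ| ≤
      Real.exp (-(2 / π ^ 2 * (bernoulliVar p L * θ ^ 2))) := by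
    by_cases hπ : θ ∈ Set.Ioc (-π) π
    · have hnorm : 0 ≤ ∏ i, ‖bernoulliChar (p i) θ‖ ^ L i :=
        Finset.prod_nonneg fun i _ => by positivity
      rw [Set.indicator_of_mem hπ, bernoulliIntegrand_eq, abs_mul, abs_of_nonneg hnorm]
      exact (mul_le_of_le_one_right hnorm (Real.abs_cos_le_one _)).trans
        (prod_norm_bernoulliChar_le p hV.le (abs_le.mpr ⟨hπ.1.le, hπ.2⟩))
    · rw [Set.indicator_of_notMem hπ, abs_zero]
      positivity
  set V := bernoulliVar p L
  set E := Real.exp (-(2 / π ^ 2 * (V * θ ^ 2))) with hE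
  have hgauss : Real.exp (-(V * θ ^ 2 / 2)) ≤ E := by
    rw [hE, Real.exp_le_exp]
    nlinarith [mul_le_mul_of_nonneg_right two_div_pi_sq_le_half (mul_nonneg hV.le (sq_nonneg θ))]
  have ht : V * ε ^ 2 ≤ V * θ ^ 2 := by
    rw [← sq_abs θ]
    gcongr
  calc _ ≤ E + E := (abs_sub _ _).trans (add_le_add hdom (by rwa [Real.abs_exp]))
    _ = 2 / ε ^ 2 / V * (V * ε ^ 2 * E) := by
      field_simp
      ring
    _ ≤ 2 / ε ^ 2 / V * gaussianErrorProfile (V * θ ^ 2) := by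
      rw [gaussianErrorProfile, ← hE]
      gcongr
      rw [add_assoc]
      exact ht.trans (le_add_of_nonneg_right (by positivity))

lemma exists_abs_indicator_bernoulliIntegrand_sub_le (hA : 0 ≤ A) (D : ℝ) :
    ∃ C, ∀ (L : ι → ℕ) (N : ℕ), 0 < bernoulliVar p L → ∑ i, (L i : ℝ) ≤ A * bernoulliVar p L →
      |bernoulliMean p L - N| ≤ D → ∀ θ,
        |(Set.Ioc (-π) π).indicator (bernoulliIntegrand p L N) θ -
            Real.exp (-(bernoulliVar p L * θ ^ 2 / 2))| ≤
          C / bernoulliVar p L * gaussianErrorProfile (bernoulliVar p L * θ ^ 2) := by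
  obtain ⟨K, hK, hcumulant⟩ := exists_eventually_cumulant_le p
  obtain ⟨ε, hε, hball⟩ := Metric.eventually_nhds_iff.mp
    (hcumulant.and (Ioo_mem_nhds (neg_lt_zero.mpr Real.pi_pos) Real.pi_pos))
  refine ⟨max (D ^ 2 + A * K + (A * K) ^ 2) (2 / ε ^ 2), fun L N hV hL hN θ => ?_⟩
  have hprofile : 0 ≤ gaussianErrorProfile (bernoulliVar p L * θ ^ 2) := by
    unfold gaussianErrorProfile
    positivity
  rcases lt_or_ge |θ| ε with hθ | hθ
  · obtain ⟨hnear, hπ⟩ := hball (by rwa [Real.dist_0_eq_abs])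
    rw [Set.indicator_of_mem (Set.Ioo_subset_Ioc_self hπ)]
    refine (abs_bernoulliIntegrand_sub_le_of_near p (abs_le.mpr ⟨hπ.1.le, hπ.2.le⟩) hV
      (fun i => (hnear i).1) (fun i => (hnear i).2.1) (fun i => (hnear i).2.2) hK hA hL hN).trans ?_
    gcongr
    exact le_max_left _ _
  · refine (abs_indicator_bernoulliIntegrand_sub_le_of_far p N hV hε hθ).trans ?_
    gcongr
    exact le_max_right _ _

lemma sqrt_mul_coeff_bernoulliGen_sub_one (N : ℕ) (hV : 0 < bernoulliVar p L) :
    √(2 * π * bernoulliVar p L) * (bernoulliGen p L).coeff N - 1 =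
      √(2 * π * bernoulliVar p L) / (2 * π) *
        ∫ θ, ((Set.Ioc (-π) π).indicator (bernoulliIntegrand p L N) θ -
          Real.exp (-(bernoulliVar p L * θ ^ 2 / 2))) := by
  have hgauss (θ : ℝ) : Real.exp (-(bernoulliVar p L * θ ^ 2 / 2)) =
      Real.exp (-(bernoulliVar p L / 2) * θ ^ 2) := by ring_nf
  have hint : Integrable ((Set.Ioc (-π) π).indicator (bernoulliIntegrand p L N)) :=
    (integrable_indicator_iff measurableSet_Ioc).mpr
      ((continuous_bernoulliIntegrand p L N).integrableOn_Ioc)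
  simp only [hgauss]
  rw [integral_sub hint (integrable_exp_neg_mul_sq (half_pos hV)), integral_gaussian,
    integral_indicator measurableSet_Ioc,
    ← intervalIntegral.integral_of_le (by linarith [Real.pi_pos]), coeff_bernoulliGen, mul_sub]
  have hnorm : √(2 * π * bernoulliVar p L) / (2 * π) * √(π / (bernoulliVar p L / 2)) = 1 := by
    rw [div_mul_eq_mul_div, ← Real.sqrt_mul (by positivity),
      show 2 * π * bernoulliVar p L * (π / (bernoulliVar p L / 2)) = (2 * π) ^ 2 by field_simp,
      Real.sqrt_sq (by positivity), div_self (by positivity)]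
  rw [hnorm]
  ring

theorem exists_abs_sqrt_mul_coeff_bernoulliGen_sub_one_le (hA : 0 ≤ A) (D : ℝ) :
    ∃ C, ∀ (L : ι → ℕ) (N : ℕ), 0 < bernoulliVar p L → ∑ i, (L i : ℝ) ≤ A * bernoulliVar p L →
      |bernoulliMean p L - N| ≤ D →
        |√(2 * π * bernoulliVar p L) * (bernoulliGen p L).coeff N - 1| ≤ C / bernoulliVar p L := by
  obtain ⟨C, hC⟩ := exists_abs_indicator_bernoulliIntegrand_sub_le p hA D
  set J := ∫ x : ℝ, gaussianErrorProfile (x ^ 2)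
  refine ⟨√(2 * π) / (2 * π) * C * J, fun L N hV hL hN => ?_⟩
  have hV' := Real.sqrt_pos.mpr hV
  have hscale (θ : ℝ) : bernoulliVar p L * θ ^ 2 = (√(bernoulliVar p L) * θ) ^ 2 := by
    rw [mul_pow, Real.sq_sqrt hV.le]
  have hbound := norm_integral_le_of_norm_le
    ((integrable_gaussianErrorProfile_sq.comp_mul_left' hV'.ne').const_mul (C / bernoulliVar p L))
    (.of_forall fun θ => (Real.norm_eq_abs _).trans_le <|
      (hC L N hV hL hN θ).trans_eq (by rw [hscale]))
  rw [integral_const_mul, Measure.integral_comp_mul_left (fun x => gaussianErrorProfile (x ^ 2)),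
    abs_of_pos (inv_pos.mpr hV'), smul_eq_mul, Real.norm_eq_abs] at hbound
  rw [sqrt_mul_coeff_bernoulliGen_sub_one p N hV, abs_mul, abs_of_nonneg (by positivity)]
  calc _ ≤ √(2 * π * bernoulliVar p L) / (2 * π) *
        (C / bernoulliVar p L * ((√(bernoulliVar p L))⁻¹ * J)) := by
        gcongr
    _ = _ := by
        rw [Real.sqrt_mul (by positivity)]
        field_simp

end LocalLimit

/-! ### Exponential tilting -/

section LinearGrowth

variable {F : Filter ℕ}

lemma tendsto_one_div_natCast (hF : F ≤ atTop) : Tendsto (fun n : ℕ => 1 / (n : ℝ)) F (𝓝 0) :=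
  tendsto_one_div_atTop_nhds_zero_nat.mono_left hF

lemma div_natCast_sub_isBigO (hF : F ≤ atTop) {u : ℕ → ℝ} {x : ℝ}
    (hu : (fun n => u n - n * x) =O[F] fun _ => (1 : ℝ)) :
    (fun n => u n / n - x) =O[F] fun n => 1 / (n : ℝ) := by
  refine (hu.mul (isBigO_refl (fun n : ℕ => 1 / (n : ℝ)) F)).congr' ?_
    (.of_forall fun n => one_mul _)
  filter_upwards [hF (eventually_ne_atTop 0)] with n hn
  field_simp

lemma sum_mul_sub_isBigO {ι : Type*} [Fintype ι] {u : ℕ → ι → ℝ} {x : ι → ℝ} (w : ι → ℝ)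
    (hu : ∀ i, (fun n => u n i - n * x i) =O[F] fun _ => (1 : ℝ)) :
    (fun n => ∑ i, u n i * w i - n * ∑ i, x i * w i) =O[F] fun _ => (1 : ℝ) := by
  refine (IsBigO.fun_sum (s := Finset.univ) fun i _ => (hu i).const_mul_left (w i)).congr_left
    fun n => ?_
  rw [Finset.mul_sum, ← Finset.sum_sub_distrib]
  exact Finset.sum_congr rfl fun i _ => by ring

end LinearGrowth

section ExponentialTilting

variable {ι : Type*} [Fintype ι] {F : Filter ℕ} {p x : ι → ℝ} {L : ℕ → ι → ℕ} {N : ℕ → ℕ}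

lemma bernoulliVar_div_sub_isBigO (hF : F ≤ atTop)
    (hL : ∀ i, (fun n => (L n i : ℝ) - n * x i) =O[F] fun _ => (1 : ℝ)) :
    (fun n => bernoulliVar p (L n) / n - ∑ i, x i * (p i * (1 - p i))) =O[F]
      fun n => 1 / (n : ℝ) :=
  div_natCast_sub_isBigO hF (sum_mul_sub_isBigO (fun i => p i * (1 - p i)) hL)

lemma exists_eventually_sum_le_bernoulliVar (hF : F ≤ atTop)
    (hκ : 0 < ∑ i, x i * (p i * (1 - p i)))
    (hL : ∀ i, (fun n => (L n i : ℝ) - n * x i) =O[F] fun _ => (1 : ℝ)) :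
    ∃ A, 0 ≤ A ∧ ∀ᶠ n : ℕ in F, 0 < n ∧
      (∑ i, x i * (p i * (1 - p i))) / 2 * n ≤ bernoulliVar p (L n) ∧
      ∑ i, (L n i : ℝ) ≤ A * bernoulliVar p (L n) := by
  set κ := ∑ i, x i * (p i * (1 - p i))
  have hzero := tendsto_one_div_natCast hF
  have hvar : Tendsto (fun n => bernoulliVar p (L n) / n) F (𝓝 κ) :=
    tendsto_sub_nhds_zero_iff.mp ((bernoulliVar_div_sub_isBigO hF hL).trans_tendsto hzero)
  have hsize : Tendsto (fun n => (∑ i, (L n i : ℝ)) / n) F (𝓝 (∑ i, x i)) := by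
    have := div_natCast_sub_isBigO hF (sum_mul_sub_isBigO (fun _ => 1) hL)
    simp only [mul_one] at this
    exact tendsto_sub_nhds_zero_iff.mp (this.trans_tendsto hzero)
  refine ⟨(|∑ i, x i| + 1) / (κ / 2), by positivity, ?_⟩
  filter_upwards [hF (eventually_gt_atTop 0), hvar.eventually_const_lt (half_lt_self hκ),
    hsize.eventually_lt_const ((le_abs_self _).trans_lt (lt_add_one _))] with n hn hv hs
  have hn' : (0 : ℝ) < n := Nat.cast_pos.mpr hn
  rw [lt_div_iff₀ hn'] at hv
  rw [div_lt_iff₀ hn'] at hs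
  refine ⟨hn, hv.le, ?_⟩
  calc ∑ i, (L n i : ℝ) ≤ (|∑ i, x i| + 1) * n := hs.le
    _ = (|∑ i, x i| + 1) / (κ / 2) * (κ / 2 * n) := by field_simp
    _ ≤ _ := by gcongr

lemma sqrt_bernoulliVar_mul_coeff_isBigO (hF : F ≤ atTop)
    (hκ : 0 < ∑ i, x i * (p i * (1 - p i)))
    (hL : ∀ i, (fun n => (L n i : ℝ) - n * x i) =O[F] fun _ => (1 : ℝ))
    (hN : (fun n => (N n : ℝ) - n * ∑ i, x i * p i) =O[F] fun _ => (1 : ℝ)) :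
    (fun n => √(2 * π * bernoulliVar p (L n)) * (bernoulliGen p (L n)).coeff (N n) - 1) =O[F]
      fun n => 1 / (n : ℝ) := by
  obtain ⟨A, hA, hlarge⟩ := exists_eventually_sum_le_bernoulliVar hF hκ hL
  obtain ⟨D, hD⟩ := ((sum_mul_sub_isBigO p hL).sub hN).bound
  obtain ⟨C, hC⟩ := exists_abs_sqrt_mul_coeff_bernoulliGen_sub_one_le p hA (D * ‖(1 : ℝ)‖)
  refine .of_bound (|C| / ((∑ i, x i * (p i * (1 - p i))) / 2)) ?_
  filter_upwards [hlarge, hD] with n ⟨hn, hv, hs⟩ hDn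
  have hV : 0 < bernoulliVar p (L n) := lt_of_lt_of_le (by positivity) hv
  refine (hC (L n) (N n) hV hs (by simpa [bernoulliMean] using hDn)).trans ?_
  rw [Real.norm_of_nonneg (by positivity), div_mul_div_comm, mul_one]
  gcongr
  exact le_abs_self C

lemma differentiableAt_sqrt_div_mul {κ : ℝ} (hκ : 0 < κ) :
    DifferentiableAt ℝ (fun z : ℝ × ℝ => √(κ / z.1) * z.2) (κ, 1) := by
  have hquot : DifferentiableAt ℝ (fun z : ℝ × ℝ => κ / z.1) (κ, 1) := by
    fun_prop (disch := exact hκ.ne')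
  exact (hquot.sqrt (div_ne_zero hκ.ne' hκ.ne')).mul differentiableAt_snd

theorem sqrt_mul_coeff_bernoulliGen_isBigO (hF : F ≤ atTop)
    (hκ : 0 < ∑ i, x i * (p i * (1 - p i)))
    (hL : ∀ i, (fun n => (L n i : ℝ) - n * x i) =O[F] fun _ => (1 : ℝ))
    (hN : (fun n => (N n : ℝ) - n * ∑ i, x i * p i) =O[F] fun _ => (1 : ℝ)) :
    (fun n => √(2 * π * (n * ∑ i, x i * (p i * (1 - p i)))) *
      (bernoulliGen p (L n)).coeff (N n) - 1) =O[F] fun n => 1 / (n : ℝ) := by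
  obtain ⟨_, _, hlarge⟩ := exists_eventually_sum_le_bernoulliVar hF hκ hL
  set κ := ∑ i, x i * (p i * (1 - p i))
  have hjoint := isBigO_comp_sub_of_differentiableAt (differentiableAt_sqrt_div_mul hκ)
    (tendsto_one_div_natCast hF)
    (u := fun n => (bernoulliVar p (L n) / n,
      √(2 * π * bernoulliVar p (L n)) * (bernoulliGen p (L n)).coeff (N n)))
    ((bernoulliVar_div_sub_isBigO hF hL).prod_left (sqrt_bernoulliVar_mul_coeff_isBigO hF hκ hL hN))
  refine hjoint.congr' ?_ .rfl
  filter_upwards [hlarge] with n ⟨hn, hv, _⟩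
  have hV : 0 < bernoulliVar p (L n) := lt_of_lt_of_le (by positivity) hv
  simp only [div_self hκ.ne', Real.sqrt_one, one_mul]
  rw [← mul_assoc, ← Real.sqrt_mul (by positivity)]
  congr 3
  field_simp

variable (c : ι → ℝ) {t : ℝ}

/-- The product of the linear factors `1 + c i * X`, with multiplicities `L i`. -/
def linearProd (L : ι → ℕ) : ℝ[X] := ∏ i, (1 + C (c i) * X) ^ L i

variable {c}

lemma coeff_linearProd_mul_pow (hp : ∀ i, (1 + c i * t) * p i = c i * t) (L : ι → ℕ) (N : ℕ) :
    (linearProd c L).coeff N * t ^ N =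
      (∏ i, (1 + c i * t) ^ L i) * (bernoulliGen p L).coeff N := by
  rw [← comp_C_mul_X_coeff, ← coeff_C_mul]
  congr 1
  simp only [linearProd, bernoulliGen, prod_comp, pow_comp, add_comp, mul_comp, one_comp, C_comp,
    X_comp, map_prod, map_pow, ← Finset.prod_mul_distrib, ← mul_pow]
  refine Finset.prod_congr rfl fun i _ => ?_
  have hq : (1 + c i * t) * (1 - p i) = 1 := by linear_combination -hp i
  rw [mul_add, ← mul_assoc, ← mul_assoc, ← C_mul, ← C_mul, ← C_mul, hq, hp i, C_1]

theorem coeff_linearProd_isBigO (hF : F ≤ atTop) (hp : ∀ i, (1 + c i * t) * p i = c i * t)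
    (hκ : 0 < ∑ i, x i * (p i * (1 - p i)))
    (hL : ∀ i, (fun n => (L n i : ℝ) - n * x i) =O[F] fun _ => (1 : ℝ))
    (hN : (fun n => (N n : ℝ) - n * ∑ i, x i * p i) =O[F] fun _ => (1 : ℝ)) :
    (fun n => √(2 * π * (n * ∑ i, x i * (p i * (1 - p i)))) / (∏ i, (1 + c i * t) ^ L n i) *
      ((linearProd c (L n)).coeff (N n) * t ^ N n) - 1) =O[F] fun n => 1 / (n : ℝ) := by
  refine (sqrt_mul_coeff_bernoulliGen_isBigO hF hκ hL hN).congr_left fun n => ?_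
  have hne : ∏ i, (1 + c i * t) ^ L n i ≠ 0 := by
    refine Finset.prod_ne_zero_iff.mpr fun i _ => pow_ne_zero _ fun h => ?_
    linarith [hp i ▸ h ▸ zero_mul (p i)]
  rw [coeff_linearProd_mul_pow hp, ← mul_assoc (_ / _), div_mul_cancel₀ _ hne]

lemma coeff_mul_linear (P : ℝ[X]) (z₀ z₁ : ℂ) (N : ℕ) :
    (P.map ofRealHom * (C z₀ + C z₁ * X)).coeff (N + 1) =
      z₀ * P.coeff (N + 1) + z₁ * P.coeff N := by
  rw [mul_add, coeff_add, coeff_mul_C, ← mul_assoc, coeff_mul_X, coeff_mul_C, coeff_map,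
    coeff_map, ofRealHom_eq_coe, ofRealHom_eq_coe, mul_comm z₀, mul_comm z₁]

theorem coeff_linearProd_mul_linear_isBigO (hF : F ≤ atTop)
    (hp : ∀ i, (1 + c i * t) * p i = c i * t) (hκ : 0 < ∑ i, x i * (p i * (1 - p i)))
    (hL : ∀ i, (fun n => (L n i : ℝ) - n * x i) =O[F] fun _ => (1 : ℝ))
    (hN : (fun n => (N n : ℝ) - n * ∑ i, x i * p i) =O[F] fun _ => (1 : ℝ)) (z₀ z₁ : ℂ) :
    (fun n => ((√(2 * π * (n * ∑ i, x i * (p i * (1 - p i)))) / (∏ i, (1 + c i * t) ^ L n i) *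
      t ^ (N n + 1) : ℝ) : ℂ) *
        ((linearProd c (L n)).map ofRealHom * (C z₀ + C z₁ * X)).coeff (N n + 1) -
      (z₀ + z₁ * t)) =O[F] fun n => 1 / (n : ℝ) := by
  have hN' : (fun n => ((N n + 1 : ℕ) : ℝ) - n * ∑ i, x i * p i) =O[F] fun _ => (1 : ℝ) :=
    (hN.add (isBigO_refl _ F)).congr_left fun n => by push_cast; ring
  have lower := isBigO_ofReal_left.mpr (coeff_linearProd_isBigO hF hp hκ hL hN)
  have upper := isBigO_ofReal_left.mpr (coeff_linearProd_isBigO hF hp hκ hL hN')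
  refine ((upper.const_mul_left z₀).add (lower.const_mul_left (z₁ * t))).congr_left fun n => ?_
  rw [coeff_mul_linear]
  push_cast
  ring

end ExponentialTilting

/-! ### The amplitudes as polynomial coefficients -/

section Walk

variable (a b : ℂ) (φ : ℂ × ℂ)

lemma qwStep_iterate_succ_apply (n : ℕ) (f : ℤ → ℂ × ℂ) (x : ℤ) :
    (qwStep a b)^[n + 1] f x =
      (a * ((qwStep a b)^[n] f (x + 1)).1 + b * ((qwStep a b)^[n] f (x - 1)).2,
        -(starRingEnd ℂ) b * ((qwStep a b)^[n] f (x + 1)).1 +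
          (starRingEnd ℂ) a * ((qwStep a b)^[n] f (x - 1)).2) := by
  rw [Function.iterate_succ_apply', qwStep]

lemma qwStep_iterate_qwDelta_of_lt_abs (n : ℕ) {x : ℤ} (hx : (n : ℤ) < |x|) :
    (qwStep a b)^[n] (qwDelta φ) x = 0 := by
  induction n generalizing x with
  | zero => exact if_neg (abs_pos.mp hx)
  | succ n ih =>
    rw [qwStep_iterate_succ_apply, ih (by grind), ih (by grind)]
    simp

lemma qwStep_iterate_qwDelta_of_odd (n : ℕ) {x : ℤ} (hx : Odd ((n : ℤ) + x)) :
    (qwStep a b)^[n] (qwDelta φ) x = 0 := by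
  induction n generalizing x with
  | zero => exact if_neg fun h => by simp [h] at hx
  | succ n ih =>
    rw [qwStep_iterate_succ_apply, ih (by grind), ih (by grind)]
    simp

lemma qwP_of_odd {n : ℕ} {y : ℤ} (h : Odd ((n : ℤ) + y)) : qwP a b φ n y = 0 := by
  simp [qwP, qwStep_iterate_qwDelta_of_odd a b φ n h, nsq]

/-- The state of the walk, started from `δ₀ ⊗ φ`, after `l` steps to the right and `m` to the
left: the value at the site `l - m` at time `l + m`. -/
def qwState (l m : ℕ) : ℂ × ℂ := (qwStep a b)^[l + m] (qwDelta φ) ((l : ℤ) - m)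

lemma qwState_succ_succ (l m : ℕ) :
    qwState a b φ (l + 1) (m + 1) =
      (a * (qwState a b φ (l + 1) m).1 + b * (qwState a b φ l (m + 1)).2,
        -(starRingEnd ℂ) b * (qwState a b φ (l + 1) m).1 +
          (starRingEnd ℂ) a * (qwState a b φ l (m + 1)).2) := by
  have htime : l + 1 + m = l + (m + 1) := by ring
  simp only [qwState, ← add_assoc (l + 1), qwStep_iterate_succ_apply, htime]
  push_cast
  ring_nf

lemma qwState_succ_zero (l : ℕ) :
    qwState a b φ (l + 1) 0 =
      (b * (qwState a b φ l 0).2, (starRingEnd ℂ) a * (qwState a b φ l 0).2) := by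
  have hout := qwStep_iterate_qwDelta_of_lt_abs a b φ l (x := (l : ℤ) + 1 + 1) (by grind)
  simp [qwState, qwStep_iterate_succ_apply, -Function.iterate_succ, hout]

lemma qwState_zero_succ (m : ℕ) :
    qwState a b φ 0 (m + 1) =
      (a * (qwState a b φ 0 m).1, -(starRingEnd ℂ) b * (qwState a b φ 0 m).1) := by
  have hout := qwStep_iterate_qwDelta_of_lt_abs a b φ m (x := -(m : ℤ) - 1 - 1) (by grind)
  have hsite : -((m : ℤ) + 1) = -m - 1 := by ring
  simp [qwState, qwStep_iterate_succ_apply, -Function.iterate_succ, hsite, hout]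

lemma qwState_zero_right_snd (l : ℕ) :
    (qwState a b φ l 0).2 = (starRingEnd ℂ) a ^ l * φ.2 := by
  induction l with
  | zero => simp [qwState, qwDelta]
  | succ l ih => rw [qwState_succ_zero, ih, pow_succ', mul_assoc]

lemma qwState_zero_left_fst (m : ℕ) : (qwState a b φ 0 m).1 = a ^ m * φ.1 := by
  induction m with
  | zero => simp [qwState, qwDelta]
  | succ m ih => rw [qwState_zero_succ, ih, pow_succ', mul_assoc]

/-- The generating polynomial `(1 - s X)ˡ (1 + X)ᵐ (φ₂ - (conj b / a) φ₁ X)`, `s = |b|² / |a|²`,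
whose coefficients are, up to powers of `a` and `conj a`, the components of the walk. -/
def qwPoly (l m : ℕ) : ℂ[X] :=
  (linearProd ![-(‖b‖ ^ 2 / ‖a‖ ^ 2), 1] ![l, m]).map ofRealHom *
    (C φ.2 + C (-((starRingEnd ℂ) b / a * φ.1)) * X)

lemma qwPoly_eq (l m : ℕ) :
    qwPoly a b φ l m = (1 - C (‖b‖ ^ 2 / ‖a‖ ^ 2 : ℂ) * X) ^ l * (1 + X) ^ m *
      (C φ.2 - C ((starRingEnd ℂ) b / a * φ.1) * X) := by
  simp [qwPoly, linearProd, Fin.prod_univ_two, sub_eq_add_neg]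

lemma coeff_qwPoly_succ_right (l m N : ℕ) :
    (qwPoly a b φ l (m + 1)).coeff (N + 1) =
      (qwPoly a b φ l m).coeff N + (qwPoly a b φ l m).coeff (N + 1) := by
  have h : qwPoly a b φ l (m + 1) = qwPoly a b φ l m * X + qwPoly a b φ l m := by
    rw [qwPoly_eq, qwPoly_eq]
    ring
  rw [h, coeff_add, coeff_mul_X]

lemma coeff_qwPoly_succ_left (l m N : ℕ) :
    (qwPoly a b φ (l + 1) m).coeff (N + 1) =
      -(‖b‖ ^ 2 / ‖a‖ ^ 2) * (qwPoly a b φ l m).coeff N + (qwPoly a b φ l m).coeff (N + 1) := by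
  have h : qwPoly a b φ (l + 1) m =
      C (-(‖b‖ ^ 2 / ‖a‖ ^ 2) : ℂ) * (qwPoly a b φ l m * X) + qwPoly a b φ l m := by
    rw [qwPoly_eq, qwPoly_eq, C_neg]
    ring
  rw [h, coeff_add, coeff_C_mul, coeff_mul_X]

lemma coeff_zero_qwPoly_zero_right (l : ℕ) : (qwPoly a b φ l 0).coeff 0 = φ.2 := by
  simp [qwPoly, linearProd, coeff_zero_eq_eval_zero, Fin.prod_univ_two]

lemma coeff_succ_qwPoly_zero_left (m : ℕ) :
    (qwPoly a b φ 0 m).coeff (m + 1) = -((starRingEnd ℂ) b / a * φ.1) := by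
  rw [qwPoly, coeff_mul_linear]
  simp [linearProd, Fin.prod_univ_two, coeff_one_add_X_pow]

variable {a}

theorem qwState_eq_coeff_qwPoly (ha : a ≠ 0) (l m : ℕ) :
    (qwState a b φ (l + 1) m).1 =
        a ^ m * (starRingEnd ℂ) a ^ l * b * (qwPoly a b φ l m).coeff m ∧
      (qwState a b φ l (m + 1)).2 =
        a ^ (m + 1) * (starRingEnd ℂ) a ^ l * (qwPoly a b φ l m).coeff (m + 1) := by
  have ha' : (starRingEnd ℂ) a ≠ 0 := (_root_.map_ne_zero _).mpr ha
  induction h : l + m generalizing l m with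
  | zero =>
    obtain ⟨rfl, rfl⟩ := add_eq_zero.mp h
    rw [qwState_succ_zero, qwState_zero_succ, qwState_zero_right_snd, qwState_zero_left_fst,
      coeff_zero_qwPoly_zero_right, coeff_succ_qwPoly_zero_left]
    exact ⟨by simp, by field_simp; simp⟩
  | succ n ih =>
    constructor
    · cases m with
      | zero =>
        rw [qwState_succ_zero, qwState_zero_right_snd, coeff_zero_qwPoly_zero_right]
        ring
      | succ m =>
        rw [qwState_succ_succ, coeff_qwPoly_succ_right, (ih l m (by omega)).1,
          (ih l m (by omega)).2]
        ring
    · cases l with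
      | zero =>
        rw [qwState_zero_succ, qwState_zero_left_fst, coeff_succ_qwPoly_zero_left]
        field_simp
        ring
      | succ l =>
        rw [qwState_succ_succ, coeff_qwPoly_succ_left, (ih l m (by omega)).1,
          (ih l m (by omega)).2, ← conj_mul', ← conj_mul']
        field_simp
        ring

theorem qwP_eq_norm_coeff_qwPoly (ha : a ≠ 0) (l m : ℕ) :
    qwP a b φ (l + m + 2) ((l : ℤ) - m) = (‖a‖ ^ (l + m + 2)) ^ 2 *
      (‖b‖ ^ 2 / ‖a‖ ^ 2 * ‖(qwPoly a b φ l (m + 1)).coeff (m + 1)‖ ^ 2 +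
        ‖(qwPoly a b φ (l + 1) m).coeff (m + 1)‖ ^ 2) := by
  have hP : qwP a b φ (l + m + 2) ((l : ℤ) - m) = nsq (qwState a b φ (l + 1) (m + 1)) := by
    simp only [qwP, qwState]
    push_cast
    ring_nf
  have ha' : ‖a‖ ≠ 0 := norm_ne_zero_iff.mpr ha
  rw [hP, nsq, (qwState_eq_coeff_qwPoly b φ ha l (m + 1)).1,
    (qwState_eq_coeff_qwPoly b φ ha (l + 1) m).2]
  simp only [norm_mul, norm_pow, RCLike.norm_conj]
  field_simp
  ring

end Walk

/-! ### The saddle point and the rate function -/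

section SaddlePoint

variable {a b : ℂ} {ξ : ℝ}

/-- The right half `|a| < ξ < 1` of the region of exponential decay of the walk with
coefficients `a`, `b`. -/
structure DecayRegime (a b : ℂ) (ξ : ℝ) : Prop where
  norm_sq_add_norm_sq : ‖a‖ ^ 2 + ‖b‖ ^ 2 = 1
  norm_left_pos : 0 < ‖a‖
  norm_right_pos : 0 < ‖b‖
  norm_left_lt : ‖a‖ < ξ
  lt_one : ξ < 1

/-- The saddle point of the generating polynomial `qwPoly` in the direction `ξ` is `-ρ`, with
`ρ ∈ (0, 1)` given by this formula. -/
def saddle (a b : ℂ) (ξ : ℝ) : ℝ := (‖b‖ * ξ - √(ξ ^ 2 - ‖a‖ ^ 2)) / (‖b‖ * (1 + ξ))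

/-- The parameters of the signed Bernoulli factors obtained by tilting the factors
`1 - (|b|² / |a|²) X` and `1 + X` of `qwPoly` to the saddle point. -/
def saddleTilt (a b : ℂ) (ξ : ℝ) : Fin 2 → ℝ :=
  ![‖b‖ * (1 - ξ) / (‖b‖ + √(ξ ^ 2 - ‖a‖ ^ 2)),
    -(‖b‖ * ξ - √(ξ ^ 2 - ‖a‖ ^ 2)) / (‖b‖ + √(ξ ^ 2 - ‖a‖ ^ 2))]

/-- The asymptotic proportions of right and left steps on a path of mean velocity `ξ`. -/
def stepRatio (ξ : ℝ) : Fin 2 → ℝ := ![(1 + ξ) / 2, (1 - ξ) / 2]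

/-- The variance per step of the tilted factors. -/
def saddleVar (a b : ℂ) (ξ : ℝ) : ℝ :=
  (1 - ξ ^ 2) * ‖b‖ * √(ξ ^ 2 - ‖a‖ ^ 2) / (‖b‖ + √(ξ ^ 2 - ‖a‖ ^ 2)) ^ 2

namespace DecayRegime

variable (h : DecayRegime a b ξ)

include h

lemma pos : 0 < ξ := h.norm_left_pos.trans h.norm_left_lt

lemma discr_pos : 0 < ξ ^ 2 - ‖a‖ ^ 2 :=
  sub_pos.mpr (pow_lt_pow_left₀ h.norm_left_lt (norm_nonneg a) two_ne_zero)

lemma sqrt_pos : 0 < √(ξ ^ 2 - ‖a‖ ^ 2) := Real.sqrt_pos.mpr h.discr_pos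

lemma sq_sqrt : √(ξ ^ 2 - ‖a‖ ^ 2) ^ 2 = ξ ^ 2 - ‖a‖ ^ 2 := Real.sq_sqrt h.discr_pos.le

lemma one_sub_pos : 0 < 1 - ξ := sub_pos.mpr h.lt_one

lemma one_sub_sq_pos : 0 < 1 - ξ ^ 2 := by nlinarith [h.pos, h.lt_one]

lemma eventually : ∀ᶠ η in 𝓝 ξ, DecayRegime a b η := by
  filter_upwards [lt_mem_nhds h.norm_left_lt, gt_mem_nhds h.lt_one] with η hleft hright
  exact { h with norm_left_lt := hleft, lt_one := hright }

lemma one_sub_saddle :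
    1 - saddle a b ξ = (‖b‖ + √(ξ ^ 2 - ‖a‖ ^ 2)) / (‖b‖ * (1 + ξ)) := by
  have := h.norm_right_pos
  have := h.pos
  rw [saddle]
  field_simp
  ring

lemma saddle_eq :
    saddle a b ξ = ‖a‖ ^ 2 * (1 - ξ) / (‖b‖ * (‖b‖ * ξ + √(ξ ^ 2 - ‖a‖ ^ 2))) := by
  have := h.norm_right_pos
  have := h.pos
  have := h.sqrt_pos
  rw [saddle, div_eq_div_iff (by positivity) (by positivity)]
  linear_combination (-‖b‖) * h.sq_sqrt + ‖b‖ * ξ ^ 2 * h.norm_sq_add_norm_sq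

lemma one_add_mul_saddle :
    1 + ‖b‖ ^ 2 / ‖a‖ ^ 2 * saddle a b ξ =
      (‖b‖ + √(ξ ^ 2 - ‖a‖ ^ 2)) / (‖b‖ * ξ + √(ξ ^ 2 - ‖a‖ ^ 2)) := by
  have := h.norm_left_pos
  have := h.norm_right_pos
  have := h.pos
  have := h.sqrt_pos
  rw [h.saddle_eq]
  field_simp
  ring

lemma saddle_pos : 0 < saddle a b ξ := by
  have := h.norm_left_pos
  have := h.norm_right_pos
  have := h.pos
  have := h.sqrt_pos
  have := h.one_sub_pos
  rw [h.saddle_eq]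
  positivity

lemma one_sub_saddle_pos : 0 < 1 - saddle a b ξ := by
  have := h.norm_right_pos
  have := h.pos
  have := h.sqrt_pos
  rw [h.one_sub_saddle]
  positivity

lemma one_add_mul_saddle_pos : 0 < 1 + ‖b‖ ^ 2 / ‖a‖ ^ 2 * saddle a b ξ := by
  have := h.saddle_pos
  positivity

lemma tilt_eq (i : Fin 2) :
    (1 + ![-(‖b‖ ^ 2 / ‖a‖ ^ 2), 1] i * -saddle a b ξ) * saddleTilt a b ξ i =
      ![-(‖b‖ ^ 2 / ‖a‖ ^ 2), 1] i * -saddle a b ξ := by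
  have := h.norm_left_pos
  have := h.norm_right_pos
  have := h.pos
  have := h.sqrt_pos
  fin_cases i
  · simp only [saddleTilt, Fin.zero_eta, Matrix.cons_val_zero, neg_mul_neg]
    rw [h.one_add_mul_saddle, h.saddle_eq]
    field_simp
  · simp only [saddleTilt, Fin.mk_one, Matrix.cons_val_one, Matrix.cons_val_fin_one, one_mul]
    rw [← sub_eq_add_neg, h.one_sub_saddle, saddle]
    field_simp

lemma sum_stepRatio_mul_tilt : ∑ i, stepRatio ξ i * saddleTilt a b ξ i = (1 - ξ) / 2 := by
  have := h.norm_right_pos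
  have := h.sqrt_pos
  simp only [stepRatio, saddleTilt, Fin.sum_univ_two, Matrix.cons_val_zero, Matrix.cons_val_one,
    Matrix.cons_val_fin_one]
  field_simp
  ring

lemma sum_stepRatio_mul_variance :
    ∑ i, stepRatio ξ i * (saddleTilt a b ξ i * (1 - saddleTilt a b ξ i)) = saddleVar a b ξ := by
  have := h.norm_right_pos
  have := h.sqrt_pos
  simp only [stepRatio, saddleTilt, saddleVar, Fin.sum_univ_two, Matrix.cons_val_zero,
    Matrix.cons_val_one, Matrix.cons_val_fin_one]
  field_simp
  ring

lemma saddleVar_pos : 0 < saddleVar a b ξ := by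
  have := h.norm_right_pos
  have := h.sqrt_pos
  have := h.one_sub_sq_pos
  unfold saddleVar
  positivity

lemma HQ_eq_saddle :
    HQ a b ξ = -(2 * Real.log ‖a‖ + (1 + ξ) * Real.log (1 + ‖b‖ ^ 2 / ‖a‖ ^ 2 * saddle a b ξ) +
      (1 - ξ) * (Real.log (1 - saddle a b ξ) - Real.log (saddle a b ξ))) := by
  have ha := h.norm_left_pos
  have hb := h.norm_right_pos
  have hξ := h.pos
  have hq := h.sqrt_pos
  have hξ' := h.one_sub_pos
  have hsq : 1 - ξ ^ 2 = (1 - ξ) * (1 + ξ) := by ring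
  rw [h.one_add_mul_saddle, h.one_sub_saddle, h.saddle_eq, HQ, abs_of_pos hξ, hsq,
    Real.log_mul, Real.log_div, Real.log_div, Real.log_div, Real.log_mul, Real.log_mul,
    Real.log_mul, Real.log_pow]
  · push_cast
    ring
  all_goals positivity

lemma saddle_stationary :
    (1 + ξ) * (‖b‖ ^ 2 / ‖a‖ ^ 2) / (1 + ‖b‖ ^ 2 / ‖a‖ ^ 2 * saddle a b ξ) =
      (1 - ξ) * (1 / (1 - saddle a b ξ) + 1 / saddle a b ξ) := by
  have := h.norm_left_pos
  have := h.norm_right_pos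
  have := h.pos
  have := h.sqrt_pos
  have := h.one_sub_pos
  have hsum : 1 / (1 - saddle a b ξ) + 1 / saddle a b ξ =
      1 / ((1 - saddle a b ξ) * saddle a b ξ) := by
    have := h.saddle_pos.ne'
    have := h.one_sub_saddle_pos.ne'
    field_simp
    ring
  rw [hsum, h.one_add_mul_saddle, h.one_sub_saddle, h.saddle_eq]
  field_simp

/-- The contribution of the moving saddle point to the derivative vanishes, because it is a
stationary point. -/
theorem hasDerivAt_HQ :
    HasDerivAt (HQ a b) (Real.log (1 - saddle a b ξ) - Real.log (saddle a b ξ) -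
      Real.log (1 + ‖b‖ ^ 2 / ‖a‖ ^ 2 * saddle a b ξ)) ξ := by
  have hb := h.norm_right_pos.ne'
  have hden : ‖b‖ * (1 + ξ) ≠ 0 := mul_ne_zero hb (by linarith [h.pos])
  have hdisc := h.discr_pos.ne'
  have hsaddle : DifferentiableAt ℝ (saddle a b) ξ := by
    unfold saddle
    fun_prop (disch := assumption)
  have hρ := hsaddle.hasDerivAt
  have hid := hasDerivAt_id' ξ
  have hlog₁ := ((hρ.const_mul (‖b‖ ^ 2 / ‖a‖ ^ 2)).const_add 1).log h.one_add_mul_saddle_pos.ne'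
  have hlog₂ := (hρ.const_sub 1).log h.one_sub_saddle_pos.ne'
  have hlog₃ := hρ.log h.saddle_pos.ne'
  have hsum := ((((hid.const_add 1).mul hlog₁).const_add (2 * Real.log ‖a‖)).add
    ((hid.const_sub 1).mul (hlog₂.sub hlog₃))).neg
  refine (hsum.congr_of_eventuallyEq
    (h.eventually.mono fun η hη => hη.HQ_eq_saddle)).congr_deriv ?_
  simp only [Pi.sub_apply]
  linear_combination (-deriv (saddle a b) ξ) * h.saddle_stationary

lemma contDiffAt_sqrt {n : WithTop ℕ∞} :
    ContDiffAt ℝ n (fun η => √(η ^ 2 - ‖a‖ ^ 2)) ξ :=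
  ((contDiffAt_id.pow 2).sub contDiffAt_const).sqrt h.discr_pos.ne'

lemma contDiffAt_HQ {n : ℕ∞} : ContDiffAt ℝ n (HQ a b) ξ := by
  have hξ := abs_pos.mpr h.pos.ne'
  have hq := h.sqrt_pos
  have hne₁ : ‖b‖ * |ξ| + √(ξ ^ 2 - ‖a‖ ^ 2) ≠ 0 := by positivity
  have hne₂ : ‖b‖ + √(ξ ^ 2 - ‖a‖ ^ 2) ≠ 0 := by positivity
  have hne₃ := h.one_sub_sq_pos.ne'
  have habs : ContDiffAt ℝ n (fun η : ℝ => |η|) ξ := contDiffAt_abs h.pos.ne'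
  have hsqrt := h.contDiffAt_sqrt (n := n)
  unfold HQ
  fun_prop (disch := assumption)

end DecayRegime

end SaddlePoint

/-! ### Transition probabilities in the hidden region -/

section TransitionProbability

variable {a b : ℂ} {ξ : ℝ} {F : Filter ℕ} {l m N : ℕ → ℕ}

/-- The reciprocal of the exponential order, at the saddle point for `ξ`, of the transition
probability after `l + 1` steps to the right and `m + 1` to the left. -/
def saddleWeight (a b : ℂ) (ξ : ℝ) (l m : ℕ) : ℝ :=
  (saddle a b ξ ^ (m + 1) / (‖a‖ ^ (l + m + 2) *
    ((1 + ‖b‖ ^ 2 / ‖a‖ ^ 2 * saddle a b ξ) ^ (l + 1) * (1 - saddle a b ξ) ^ (m + 1)))) ^ 2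

namespace DecayRegime

theorem coeff_qwPoly_isBigO (h : DecayRegime a b ξ) (hF : F ≤ atTop)
    (hl : (fun n => (l n : ℝ) - n * ((1 + ξ) / 2)) =O[F] fun _ => (1 : ℝ))
    (hm : (fun n => (m n : ℝ) - n * ((1 - ξ) / 2)) =O[F] fun _ => (1 : ℝ))
    (hN : (fun n => (N n : ℝ) - n * ((1 - ξ) / 2)) =O[F] fun _ => (1 : ℝ)) (φ : ℂ × ℂ) :
    (fun n => ((√(2 * π * (n * saddleVar a b ξ)) /
      ((1 + ‖b‖ ^ 2 / ‖a‖ ^ 2 * saddle a b ξ) ^ l n * (1 - saddle a b ξ) ^ m n) *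
        (-saddle a b ξ) ^ (N n + 1) : ℝ) : ℂ) * (qwPoly a b φ (l n) (m n)).coeff (N n + 1) -
      (φ.2 + (starRingEnd ℂ) b / a * φ.1 * saddle a b ξ)) =O[F] fun n => 1 / (n : ℝ) := by
  have hL : ∀ i, (fun n => (![l n, m n] i : ℝ) - n * stepRatio ξ i) =O[F] fun _ => (1 : ℝ) := by
    intro i
    fin_cases i
    exacts [hl, hm]
  have hvar := h.saddleVar_pos
  rw [← h.sum_stepRatio_mul_variance] at hvar
  rw [← h.sum_stepRatio_mul_tilt] at hN
  have hcoeff := coeff_linearProd_mul_linear_isBigO hF h.tilt_eq hvar hL hN φ.2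
    (-((starRingEnd ℂ) b / a * φ.1))
  simp only [h.sum_stepRatio_mul_variance, Fin.prod_univ_two, Matrix.cons_val_zero,
    Matrix.cons_val_one, Matrix.cons_val_fin_one, neg_mul_neg, one_mul, ← sub_eq_add_neg] at hcoeff
  refine hcoeff.congr_left fun n => ?_
  rw [qwPoly]
  push_cast
  ring

lemma saddleWeight_mul_qwP (h : DecayRegime a b ξ) (φ : ℂ × ℂ) {V : ℝ} (hV : 0 ≤ V) (l m : ℕ) :
    V * saddleWeight a b ξ l m * qwP a b φ (l + m + 2) ((l : ℤ) - m) =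
      ‖b‖ ^ 2 / ‖a‖ ^ 2 / (1 + ‖b‖ ^ 2 / ‖a‖ ^ 2 * saddle a b ξ) ^ 2 *
        ‖((√V / ((1 + ‖b‖ ^ 2 / ‖a‖ ^ 2 * saddle a b ξ) ^ l * (1 - saddle a b ξ) ^ (m + 1)) *
          (-saddle a b ξ) ^ (m + 1) : ℝ) : ℂ) * (qwPoly a b φ l (m + 1)).coeff (m + 1)‖ ^ 2 +
      1 / (1 - saddle a b ξ) ^ 2 *
        ‖((√V / ((1 + ‖b‖ ^ 2 / ‖a‖ ^ 2 * saddle a b ξ) ^ (l + 1) * (1 - saddle a b ξ) ^ m) *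
          (-saddle a b ξ) ^ (m + 1) : ℝ) : ℂ) * (qwPoly a b φ (l + 1) m).coeff (m + 1)‖ ^ 2 := by
  have ha := h.norm_left_pos
  have hρ := h.one_sub_saddle_pos
  have hs := h.one_add_mul_saddle_pos
  rw [qwP_eq_norm_coeff_qwPoly b φ (norm_pos_iff.mp ha)]
  simp only [norm_mul, norm_real, Real.norm_eq_abs, mul_pow, sq_abs, div_pow,
    neg_pow (saddle a b ξ), Real.sq_sqrt hV, saddleWeight, ← pow_mul, mul_comm _ 2]
  simp only [pow_mul, neg_one_sq, one_pow, one_mul]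
  generalize 1 + ‖b‖ ^ 2 / ‖a‖ ^ 2 * saddle a b ξ = σ at *
  field_simp
  ring

theorem saddleWeight_mul_qwP_isBigO (h : DecayRegime a b ξ) (hF : F ≤ atTop)
    (hl : (fun n => (l n : ℝ) - n * ((1 + ξ) / 2)) =O[F] fun _ => (1 : ℝ))
    (hm : (fun n => (m n : ℝ) - n * ((1 - ξ) / 2)) =O[F] fun _ => (1 : ℝ)) (φ : ℂ × ℂ) :
    (fun n => 2 * π * (n * saddleVar a b ξ) * saddleWeight a b ξ (l n) (m n) *
      qwP a b φ (l n + m n + 2) ((l n : ℤ) - m n) -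
        (‖b‖ ^ 2 / ‖a‖ ^ 2 / (1 + ‖b‖ ^ 2 / ‖a‖ ^ 2 * saddle a b ξ) ^ 2 +
          1 / (1 - saddle a b ξ) ^ 2) *
            ‖φ.2 + (starRingEnd ℂ) b / a * φ.1 * saddle a b ξ‖ ^ 2) =O[F]
      fun n => 1 / (n : ℝ) := by
  have hl' : (fun n => ((l n + 1 : ℕ) : ℝ) - n * ((1 + ξ) / 2)) =O[F] fun _ => (1 : ℝ) :=
    (hl.add (isBigO_refl _ F)).congr_left fun n => by push_cast; ring
  have hm' : (fun n => ((m n + 1 : ℕ) : ℝ) - n * ((1 - ξ) / 2)) =O[F] fun _ => (1 : ℝ) :=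
    (hm.add (isBigO_refl _ F)).congr_left fun n => by push_cast; ring
  have hfst := h.coeff_qwPoly_isBigO hF hl hm' hm φ
  have hsnd := h.coeff_qwPoly_isBigO hF hl' hm hm φ
  set α := ‖b‖ ^ 2 / ‖a‖ ^ 2 / (1 + ‖b‖ ^ 2 / ‖a‖ ^ 2 * saddle a b ξ) ^ 2
  set β := 1 / (1 - saddle a b ξ) ^ 2
  set w := φ.2 + (starRingEnd ℂ) b / a * φ.1 * saddle a b ξ
  have hdiff : DifferentiableAt ℝ (fun z : ℂ × ℂ => α * ‖z.1‖ ^ 2 + β * ‖z.2‖ ^ 2) (w, w) :=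
    ((differentiableAt_fst.norm_sq ℝ).const_mul α).add
      ((differentiableAt_snd.norm_sq ℝ).const_mul β)
  refine (isBigO_comp_sub_of_differentiableAt hdiff (tendsto_one_div_natCast hF)
    (u := fun n => (_, _)) (hfst.prod_left hsnd)).congr_left fun n => ?_
  have hvar := h.saddleVar_pos
  rw [h.saddleWeight_mul_qwP φ (by positivity), add_mul]

lemma saddleWeight_eq_exp (h : DecayRegime a b ξ) (l m : ℕ) :
    saddleWeight a b ξ l m = Real.exp ((l + m + 2 : ℕ) * HQ a b ξ +
      (((l : ℤ) - m : ℤ) - (l + m + 2 : ℕ) * ξ) * deriv (HQ a b) ξ) := by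
  have ha := h.norm_left_pos
  have hρ := h.saddle_pos
  have hρ' := h.one_sub_saddle_pos
  have := h.one_add_mul_saddle_pos
  rw [← Real.exp_log (show 0 < saddleWeight a b ξ l m by unfold saddleWeight; positivity),
    h.hasDerivAt_HQ.deriv, h.HQ_eq_saddle, saddleWeight, Real.log_pow, Real.log_div, Real.log_mul,
    Real.log_mul, Real.log_pow, Real.log_pow, Real.log_pow, Real.log_pow]
  · push_cast
    ring_nf
  all_goals positivity

lemma exp_HQ_div_isBigO (h : DecayRegime a b ξ) (hF : F ≤ atTop) {y : ℕ → ℝ}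
    (hy : (fun n => y n - n * ξ) =O[F] fun _ => (1 : ℝ)) :
    (fun n => Real.exp (n * HQ a b (y n / n) -
      (n * HQ a b ξ + (y n - n * ξ) * deriv (HQ a b) ξ)) - 1) =O[F] fun n => 1 / (n : ℝ) := by
  have hratio := div_natCast_sub_isBigO hF hy
  have hlim : Tendsto (fun n => y n / n) F (𝓝 ξ) :=
    tendsto_sub_nhds_zero_iff.mp (hratio.trans_tendsto (tendsto_one_div_natCast hF))
  have hderiv := h.hasDerivAt_HQ.differentiableAt.hasDerivAt
  have htaylor := ((isBigO_sub_sub_mul_of_hasDerivAt h.contDiffAt_HQ hderiv).comp_tendsto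
    hlim).trans (hratio.pow 2)
  have hexponent : (fun n => n * HQ a b (y n / n) -
      (n * HQ a b ξ + (y n - n * ξ) * deriv (HQ a b) ξ) - 0) =O[F] fun n => 1 / (n : ℝ) := by
    refine ((isBigO_refl (fun n : ℕ => (n : ℝ)) F).mul htaylor).congr' ?_ ?_ <;>
      filter_upwards [hF (eventually_ne_atTop 0)] with n hn
    · simp only [Function.comp_apply]
      field_simp
      ring
    · field_simp
  simpa only [Real.exp_zero] using isBigO_comp_sub_of_differentiableAt
    Real.differentiable_exp.differentiableAt (tendsto_one_div_natCast hF) hexponent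

end DecayRegime

end TransitionProbability

section DecayRate

variable {a b : ℂ} {ξ : ℝ} {F : Filter ℕ} {y : ℕ → ℤ}

lemma exists_eventually_stepCounts (hF : F ≤ atTop) (hξ : |ξ| < 1)
    (hpar : ∀ᶠ n : ℕ in F, Even ((n : ℤ) + y n))
    (hy : (fun n => (y n : ℝ) - n * ξ) =O[F] fun _ => (1 : ℝ)) :
    ∃ l m : ℕ → ℕ, ∀ᶠ n in F, l n + m n + 2 = n ∧ (l n : ℤ) - m n = y n := by
  refine ⟨fun n => ((n + y n) / 2 - 1).toNat, fun n => ((n - y n) / 2 - 1).toNat, ?_⟩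
  have hlim : Tendsto (fun n => |(y n : ℝ) / n|) F (𝓝 |ξ|) :=
    (tendsto_sub_nhds_zero_iff.mp
      ((div_natCast_sub_isBigO hF hy).trans_tendsto (tendsto_one_div_natCast hF))).abs
  filter_upwards [hpar, hlim.eventually_lt_const hξ, hF (eventually_gt_atTop 0)]
    with n heven hlt hn
  rw [abs_div, Nat.abs_cast, div_lt_one (Nat.cast_pos.mpr hn)] at hlt
  have habs : |y n| < n := by exact_mod_cast hlt
  rw [abs_lt] at habs
  obtain ⟨k, hk⟩ := heven
  omega

lemma stepCounts_isBigO {l m : ℕ → ℕ}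
    (hlm : ∀ᶠ n in F, l n + m n + 2 = n ∧ (l n : ℤ) - m n = y n)
    (hy : (fun n => (y n : ℝ) - n * ξ) =O[F] fun _ => (1 : ℝ)) :
    ((fun n => (l n : ℝ) - n * ((1 + ξ) / 2)) =O[F] fun _ => (1 : ℝ)) ∧
      (fun n => (m n : ℝ) - n * ((1 - ξ) / 2)) =O[F] fun _ => (1 : ℝ) := by
  have hlm' : ∀ᶠ n in F, (l n : ℝ) + m n + 2 = n ∧ (l n : ℝ) - m n = y n :=
    hlm.mono fun n ⟨htime, hsite⟩ => ⟨by exact_mod_cast htime, by exact_mod_cast hsite⟩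
  constructor
  · refine ((hy.const_mul_left (1 / 2)).sub (isBigO_refl _ F)).congr' ?_ .rfl
    filter_upwards [hlm'] with n ⟨htime, hsite⟩
    linear_combination (-1 / 2) * hsite - (1 / 2) * htime
  · refine ((hy.const_mul_left (-1 / 2)).sub (isBigO_refl _ F)).congr' ?_ .rfl
    filter_upwards [hlm'] with n ⟨htime, hsite⟩
    linear_combination (1 / 2) * hsite - (1 / 2) * htime

/-- The amplitude factor `G` of the asymptotics on the right half `|a| < η < 1` of the hidden
region. -/
def decayProfile (a b : ℂ) (φ : ℂ × ℂ) (η : ℝ) : ℝ :=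
  ((‖b‖ * η + √(η ^ 2 - ‖a‖ ^ 2)) ^ 2 / ‖a‖ ^ 2 + (1 + η) ^ 2) / 4 *
    ‖φ.2 + (starRingEnd ℂ) b / a * φ.1 * saddle a b η‖ ^ 2

lemma decayProfile_nonneg (φ : ℂ × ℂ) (η : ℝ) : 0 ≤ decayProfile a b φ η := by
  unfold decayProfile
  positivity

namespace DecayRegime

lemma decayProfile_eq (h : DecayRegime a b ξ) (φ : ℂ × ℂ) :
    decayProfile a b φ ξ = (‖b‖ + √(ξ ^ 2 - ‖a‖ ^ 2)) ^ 2 / (4 * ‖b‖ ^ 2) *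
      ((‖b‖ ^ 2 / ‖a‖ ^ 2 / (1 + ‖b‖ ^ 2 / ‖a‖ ^ 2 * saddle a b ξ) ^ 2 +
        1 / (1 - saddle a b ξ) ^ 2) *
          ‖φ.2 + (starRingEnd ℂ) b / a * φ.1 * saddle a b ξ‖ ^ 2) := by
  have := h.norm_left_pos
  have := h.norm_right_pos
  have := h.pos
  have := h.sqrt_pos
  rw [decayProfile, h.one_add_mul_saddle, h.one_sub_saddle]
  field_simp

lemma contDiffAt_decayProfile (h : DecayRegime a b ξ) (φ : ℂ × ℂ) {n : WithTop ℕ∞} :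
    ContDiffAt ℝ n (decayProfile a b φ) ξ := by
  have hden : ‖b‖ * (1 + ξ) ≠ 0 := mul_ne_zero h.norm_right_pos.ne' (by linarith [h.pos])
  have hsqrt := h.contDiffAt_sqrt (n := n)
  have hsaddle : ContDiffAt ℝ n (saddle a b) ξ := by
    unfold saddle
    fun_prop (disch := assumption)
  have hcast : ContDiffAt ℝ n (fun η => (saddle a b η : ℂ)) ξ :=
    ofRealCLM.contDiff.contDiffAt.comp ξ hsaddle
  have hnorm := (contDiffAt_const.add (contDiffAt_const.mul hcast)).norm_sq ℝ
    (f := fun η => φ.2 + (starRingEnd ℂ) b / a * φ.1 * saddle a b η)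
  unfold decayProfile
  fun_prop

theorem qwP_isBigO (h : DecayRegime a b ξ) (hF : F ≤ atTop)
    (hpar : ∀ᶠ n : ℕ in F, Even ((n : ℤ) + y n))
    (hy : (fun n => (y n : ℝ) - n * ξ) =O[F] fun _ => (1 : ℝ)) (φ : ℂ × ℂ) :
    (fun n => π * n * (1 - ξ ^ 2) * √(ξ ^ 2 - ‖a‖ ^ 2) / (2 * ‖b‖) *
      Real.exp (n * HQ a b (y n / n)) * qwP a b φ n (y n) - decayProfile a b φ ξ) =O[F]
        fun n => 1 / (n : ℝ) := by
  have hξ : |ξ| < 1 := abs_lt.mpr ⟨by linarith [h.pos], h.lt_one⟩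
  obtain ⟨l, m, hlm⟩ := exists_eventually_stepCounts hF hξ hpar hy
  obtain ⟨hl, hm⟩ := stepCounts_isBigO hlm hy
  have hmain := h.saddleWeight_mul_qwP_isBigO hF hl hm φ
  have hexp := h.exp_HQ_div_isBigO hF hy
  rw [h.decayProfile_eq φ]
  set K := (‖b‖ ^ 2 / ‖a‖ ^ 2 / (1 + ‖b‖ ^ 2 / ‖a‖ ^ 2 * saddle a b ξ) ^ 2 +
    1 / (1 - saddle a b ξ) ^ 2) * ‖φ.2 + (starRingEnd ℂ) b / a * φ.1 * saddle a b ξ‖ ^ 2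
  have hdiff : DifferentiableAt ℝ (fun z : ℝ × ℝ =>
      (‖b‖ + √(ξ ^ 2 - ‖a‖ ^ 2)) ^ 2 / (4 * ‖b‖ ^ 2) * (z.1 * z.2)) (1, K) := by fun_prop
  refine (isBigO_comp_sub_of_differentiableAt hdiff (tendsto_one_div_natCast hF)
    (u := fun n => (Real.exp (n * HQ a b (y n / n) -
      (n * HQ a b ξ + (y n - n * ξ) * deriv (HQ a b) ξ)),
      2 * π * (n * saddleVar a b ξ) * saddleWeight a b ξ (l n) (m n) *
        qwP a b φ (l n + m n + 2) ((l n : ℤ) - m n)))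
    (hexp.prod_left hmain)).congr' ?_ .rfl
  filter_upwards [hlm] with n ⟨htime, hsite⟩
  have hweight := h.saddleWeight_eq_exp (l n) (m n)
  rw [htime, hsite] at hweight
  simp only [htime, hsite, hweight, one_mul, Real.exp_sub]
  have hb := h.norm_right_pos
  have hq := h.sqrt_pos
  rw [saddleVar]
  field_simp
  ring

end DecayRegime

end DecayRate

section Reflection

variable (a b : ℂ)

lemma qwStep_iterate_reflect (φ : ℂ × ℂ) (n : ℕ) (x : ℤ) :
    (qwStep ((starRingEnd ℂ) a) (-(starRingEnd ℂ) b))^[n] (qwDelta φ.swap) (-x) =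
      ((qwStep a b)^[n] (qwDelta φ) x).swap := by
  induction n generalizing x with
  | zero => by_cases hx : x = 0 <;> simp [qwDelta, hx]
  | succ n ih =>
    have hleft := ih (x - 1)
    have hright := ih (x + 1)
    rw [neg_sub', sub_neg_eq_add] at hleft
    rw [neg_add'] at hright
    rw [qwStep_iterate_succ_apply, qwStep_iterate_succ_apply, hleft, hright]
    simp [add_comm]

lemma qwP_reflect (φ : ℂ × ℂ) (n : ℕ) (y : ℤ) :
    qwP ((starRingEnd ℂ) a) (-(starRingEnd ℂ) b) φ.swap n (-y) = qwP a b φ n y := by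
  rw [qwP, qwStep_iterate_reflect, qwP, nsq, nsq, Prod.fst_swap, Prod.snd_swap, add_comm]

lemma HQ_reflect (η : ℝ) :
    HQ ((starRingEnd ℂ) a) (-(starRingEnd ℂ) b) (-η) = HQ a b η := by
  simp [HQ]

lemma DecayRegime.reflect {a b : ℂ} {ξ : ℝ} (h : DecayRegime a b ξ) :
    DecayRegime ((starRingEnd ℂ) a) (-(starRingEnd ℂ) b) ξ := by
  obtain ⟨hunit, ha, hb, hlt, hone⟩ := h
  constructor <;> simpa only [norm_neg, RCLike.norm_conj]

/-- The amplitude factor `G` on the hidden region `|a| < |η| < 1`. The reflection `x ↦ -x` of `ℤ`,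
which exchanges the two components, carries negative `η` to positive ones. -/
def hiddenProfile (φ : ℂ × ℂ) (η : ℝ) : ℝ :=
  if 0 < η then decayProfile a b φ η
  else decayProfile ((starRingEnd ℂ) a) (-(starRingEnd ℂ) b) φ.swap (-η)

lemma hiddenProfile_nonneg (φ : ℂ × ℂ) (η : ℝ) : 0 ≤ hiddenProfile a b φ η := by
  unfold hiddenProfile
  split_ifs <;> exact decayProfile_nonneg _ _

end Reflection

section HiddenRegion

variable {a b : ℂ} {ξ : ℝ} {F : Filter ℕ} {y : ℕ → ℤ}

lemma contDiffAt_hiddenProfile (h : DecayRegime a b |ξ|) (φ : ℂ × ℂ) {n : WithTop ℕ∞} :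
    ContDiffAt ℝ n (hiddenProfile a b φ) ξ := by
  rcases lt_or_gt_of_ne (abs_pos.mp h.pos) with hneg | hpos
  · rw [abs_of_neg hneg] at h
    refine ContDiffAt.congr_of_eventuallyEq
      ((h.reflect.contDiffAt_decayProfile φ.swap).comp ξ contDiffAt_id.neg) ?_
    filter_upwards [gt_mem_nhds hneg] with η hη using if_neg hη.not_gt
  · rw [abs_of_pos hpos] at h
    refine (h.contDiffAt_decayProfile φ).congr_of_eventuallyEq ?_
    filter_upwards [lt_mem_nhds hpos] with η hη using if_pos hη

theorem qwP_sub_hiddenProfile_isBigO (h : DecayRegime a b |ξ|) (hF : F ≤ atTop)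
    (hpar : ∀ᶠ n : ℕ in F, Even ((n : ℤ) + y n))
    (hy : (fun n => (y n : ℝ) - n * ξ) =O[F] fun _ => (1 : ℝ)) (φ : ℂ × ℂ) :
    (fun n => π * n * (1 - ξ ^ 2) * √(ξ ^ 2 - ‖a‖ ^ 2) / (2 * ‖b‖) *
      Real.exp (n * HQ a b (y n / n)) * qwP a b φ n (y n) - hiddenProfile a b φ ξ) =O[F]
        fun n => 1 / (n : ℝ) := by
  rcases lt_or_gt_of_ne (abs_pos.mp h.pos) with hneg | hpos
  · rw [abs_of_neg hneg] at h
    rw [hiddenProfile, if_neg hneg.not_gt]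
    have hpar' : ∀ᶠ n : ℕ in F, Even ((n : ℤ) + -y n) :=
      hpar.mono fun n hn => by rwa [Int.even_add, even_neg, ← Int.even_add]
    have hy' : (fun n => ((-y n : ℤ) : ℝ) - n * -ξ) =O[F] fun _ => (1 : ℝ) :=
      hy.neg_left.congr_left fun n => by push_cast; ring
    simpa only [norm_neg, RCLike.norm_conj, neg_sq, Int.cast_neg, neg_div, HQ_reflect,
      qwP_reflect] using h.reflect.qwP_isBigO hF hpar' hy' φ.swap
  · rw [abs_of_pos hpos] at h
    rw [hiddenProfile, if_pos hpos]
    exact h.qwP_isBigO hF hpar hy φ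

/-- The `O(1/n)` error of the asymptotics of `qwP`. It is forced on the sites `x` that have the
parity of `n`; elsewhere both sides of the asymptotics vanish and the value is set to `0`. -/
def hiddenError (a b : ℂ) (φ : ℂ × ℂ) (ξ : ℝ) (n : ℕ) (x : ℤ) : ℝ :=
  if Even ((n : ℤ) + x) then
    π * n * (1 - ξ ^ 2) * √(ξ ^ 2 - ‖a‖ ^ 2) / (2 * ‖b‖) *
      Real.exp (n * HQ a b (x / n)) * qwP a b φ n x - hiddenProfile a b φ ξ
  else 0

lemma hiddenError_isBigO (h : DecayRegime a b |ξ|)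
    (hy : (fun n => (y n : ℝ) - n * ξ) =O[atTop] fun _ => (1 : ℝ)) (φ : ℂ × ℂ) :
    (fun n => hiddenError a b φ ξ n (y n)) =O[atTop] fun n => 1 / (n : ℝ) := by
  set s := {n : ℕ | Even ((n : ℤ) + y n)}
  have heven : (fun n => hiddenError a b φ ξ n (y n)) =O[atTop ⊓ 𝓟 s] fun n => 1 / (n : ℝ) := by
    have hs : ∀ᶠ n : ℕ in atTop ⊓ 𝓟 s, Even ((n : ℤ) + y n) :=
      mem_inf_of_right (mem_principal_self s)
    exact (qwP_sub_hiddenProfile_isBigO h inf_le_left hs (hy.mono inf_le_left) φ).congr'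
      (hs.mono fun n hn => (if_pos hn).symm) .rfl
  have hodd : (fun n => hiddenError a b φ ξ n (y n)) =O[atTop ⊓ 𝓟 sᶜ] fun n => 1 / (n : ℝ) :=
    (isBigO_zero _ _).congr'
      (mem_inf_of_right fun n hn => (if_neg hn).symm) .rfl
  simpa only [← inf_sup_left, sup_principal, Set.union_compl_self, principal_univ, inf_top_eq]
    using heven.sup hodd

lemma qwP_eq_add_hiddenError (h : DecayRegime a b |ξ|) (φ : ℂ × ℂ) {n : ℕ} (hn : 0 < n) (x : ℤ) :
    qwP a b φ n x = (1 + (-1 : ℝ) ^ ((n : ℤ) + x)) * ‖b‖ /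
        (π * n * (1 - ξ ^ 2) * √(ξ ^ 2 - ‖a‖ ^ 2)) * Real.exp (-n * HQ a b (x / n)) *
      (hiddenProfile a b φ ξ + hiddenError a b φ ξ n x) := by
  rcases Int.even_or_odd ((n : ℤ) + x) with heven | hodd
  · have hb := h.norm_right_pos
    have hsqrt := sq_abs ξ ▸ h.sqrt_pos
    have hsub := sq_abs ξ ▸ h.one_sub_sq_pos
    rw [heven.neg_one_zpow, hiddenError, if_pos heven, add_sub_cancel, neg_mul, Real.exp_neg]
    field_simp
    norm_num
  · rw [hodd.neg_one_zpow, qwP_of_odd a b φ hodd]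
    simp

end HiddenRegion

theorem stmt3_general (a b : ℂ) (hab1 : ‖a‖ ^ 2 + ‖b‖ ^ 2 = 1) (hab : a * b ≠ 0) (φ : ℂ × ℂ) :
    ∃ G : ℝ → ℝ,
      ContDiffOn ℝ (⊤ : ℕ∞) G {η : ℝ | ‖a‖ < |η| ∧ |η| < 1} ∧
      (∀ η : ℝ, ‖a‖ < |η| → |η| < 1 → 0 ≤ G η) ∧
      ∀ (ξ : ℝ) (y : ℕ → ℤ), ‖a‖ < |ξ| → |ξ| < 1 →
        ((fun n : ℕ => (y n : ℝ) - n * ξ) =O[atTop] fun _ : ℕ => (1 : ℝ)) →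
        ∃ E : ℕ → ℝ, (E =O[atTop] fun n : ℕ => 1 / (n : ℝ)) ∧
          ∀ n : ℕ, 0 < n →
            qwP a b φ n (y n) =
              (1 + (-1 : ℝ) ^ ((n : ℤ) + y n)) * ‖b‖ / (π * n * (1 - ξ ^ 2) * √(ξ ^ 2 - ‖a‖ ^ 2)) *
                Real.exp (-n * HQ a b (y n / n)) * (G ξ + E n) := by
  have hregime : ∀ η : ℝ, ‖a‖ < |η| → |η| < 1 → DecayRegime a b |η| := fun η hη₁ hη₂ =>
    ⟨hab1, norm_pos_iff.mpr (left_ne_zero_of_mul hab), norm_pos_iff.mpr (right_ne_zero_of_mul hab),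
      hη₁, hη₂⟩
  exact ⟨hiddenProfile a b φ,
    fun η hη => (contDiffAt_hiddenProfile (hregime η hη.1 hη.2) φ).contDiffWithinAt,
    fun η _ _ => hiddenProfile_nonneg a b φ η,
    fun ξ y hξ₁ hξ₂ hy => ⟨fun n => hiddenError a b φ ξ n (y n),
      hiddenError_isBigO (hregime ξ hξ₁ hξ₂) hy φ,
      fun n hn => qwP_eq_add_hiddenError (hregime ξ hξ₁ hξ₂) φ hn (y n)⟩⟩

/-- Theorem `hidden`: large-deviation type asymptotics of `p_n(φ;y_n)` in the
hidden region `|a| < |ξ| < 1`, `y_n = nξ + O(1)`. -/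
theorem stmt3 (a b : ℂ) (hab1 : ‖a‖ ^ 2 + ‖b‖ ^ 2 = 1) (hab : a * b ≠ 0)
    (φ : ℂ × ℂ) (hφ : nsq φ = 1) (ξ : ℝ) (hξ1 : ‖a‖ < |ξ|) (hξ2 : |ξ| < 1)
    (y : ℕ → ℤ) (hy : (fun n : ℕ => (y n : ℝ) - (n : ℝ) * ξ) =O[atTop] fun _ : ℕ => (1 : ℝ)) :
    ∃ G : ℝ → ℝ,
      ContDiffOn ℝ (⊤ : ℕ∞) G {η : ℝ | ‖a‖ < |η| ∧ |η| < 1} ∧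
      (∀ η : ℝ, ‖a‖ < |η| → |η| < 1 → 0 ≤ G η) ∧
      ∃ E : ℕ → ℝ, (E =O[atTop] fun n : ℕ => 1 / (n : ℝ)) ∧
        ∀ n : ℕ, 0 < n →
          qwP a b φ n (y n) =
            (1 + (-1 : ℝ) ^ ((n : ℤ) + y n)) * ‖b‖ /
                (Real.pi * (n : ℝ) * (1 - ξ ^ 2) * Real.sqrt (ξ ^ 2 - ‖a‖ ^ 2)) *
              Real.exp (-(n : ℝ) * HQ a b ((y n : ℝ) / (n : ℝ))) * (G ξ + E n) := by
  obtain ⟨G, hsmooth, hnonneg, hasymp⟩ := stmt3_general a b hab1 hab φ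
  exact ⟨G, hsmooth, hnonneg, hasymp ξ y hξ1 hξ2 hy⟩
end
end

section
/- For every unit vector ψ ∈ ℂ², every n ∈ ℕ and every x ∈ ℤ, one has q_n(ψ; x) = p_n(Aψ; x); in particular the row-decomposition walk V and the column-decomposition walk U have identical transition probabilities up to the change of initial spin state ψ ↦ Aψ. (Moreover V A* = A* U as operators on ℓ²(ℤ, ℂ²), where A* acts componentwise.) -/
/-!
Let `T` be the spin-dependent shift, which moves the two components one site in opposite directions.
The column walk is `U = A T` and the row walk is `V = T A`, so `A V = A T A = U A`: the matrix `A`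
turns the walk `V` started at `ψ` into the walk `U` started at `A ψ`, and it scales squared norms by
`|a|² + |b|²`. Since `A A* = A* A = |a|² + |b|²`, also `V A* = (|a|² + |b|²) T = A* U`.
-/

open Filter Topology Asymptotics MeasureTheory

noncomputable section

/-- One step of the row-decomposition quantum walk `V`:
`(Vf)(x) = R f(x+1) + S f(x-1)` with `R = [[a,b],[0,0]]`, `S = [[0,0],[−conj b, conj a]]`. -/
def qwStepV (a b : ℂ) (f : ℤ → ℂ × ℂ) : ℤ → ℂ × ℂ := fun x =>
  (a * (f (x + 1)).1 + b * (f (x + 1)).2,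
   -(starRingEnd ℂ) b * (f (x - 1)).1 + (starRingEnd ℂ) a * (f (x - 1)).2)

/-- Transition probability of the walk `V`: `q_n(ψ; x) = ‖(Vⁿ(δ₀ ⊗ ψ))(x)‖²`. -/
def qwQ (a b : ℂ) (ψ : ℂ × ℂ) (n : ℕ) (x : ℤ) : ℝ :=
  nsq (((qwStepV a b)^[n] (qwDelta ψ)) x)

/-- The matrix `A = [[a,b],[−conj b, conj a]]` acting on `ℂ²`. -/
def Amap (a b : ℂ) (u : ℂ × ℂ) : ℂ × ℂ :=
  (a * u.1 + b * u.2, -(starRingEnd ℂ) b * u.1 + (starRingEnd ℂ) a * u.2)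

/-- The adjoint matrix `A* = [[conj a, −b],[conj b, a]]` acting on `ℂ²`. -/
def AstarMap (a b : ℂ) (u : ℂ × ℂ) : ℂ × ℂ :=
  ((starRingEnd ℂ) a * u.1 - b * u.2, (starRingEnd ℂ) b * u.1 + a * u.2)

/-- The spin-dependent shift `T`: the first component at `x` comes from `x + 1`, the second from
`x - 1`. It is the factor that the two decompositions of the walk have in common. -/
def spinShift {α β : Type*} (f : ℤ → α × β) : ℤ → α × β := fun x =>
  ((f (x + 1)).1, (f (x - 1)).2)

lemma spinShift_smul {M α β : Type*} [SMul M α] [SMul M β] (c : M) (f : ℤ → α × β) :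
    spinShift (c • f) = c • spinShift f :=
  rfl

lemma comp_qwDelta {F : ℂ × ℂ → ℂ × ℂ} (hF : F 0 = 0) (φ : ℂ × ℂ) :
    F ∘ qwDelta φ = qwDelta (F φ) := by
  funext x
  simp only [Function.comp_apply, qwDelta, apply_ite F, hF]

section Coin

variable (a b : ℂ)

lemma qwStep_eq_Amap_comp_spinShift (f : ℤ → ℂ × ℂ) :
    qwStep a b f = Amap a b ∘ spinShift f :=
  rfl

lemma qwStepV_eq_spinShift_Amap_comp (f : ℤ → ℂ × ℂ) :
    qwStepV a b f = spinShift (Amap a b ∘ f) :=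
  rfl

lemma Amap_zero : Amap a b 0 = 0 := by
  simp [Amap]

lemma Amap_AstarMap (u : ℂ × ℂ) :
    Amap a b (AstarMap a b u) = ((‖a‖ : ℂ) ^ 2 + (‖b‖ : ℂ) ^ 2) • u := by
  rw [← Complex.mul_conj' a, ← Complex.mul_conj' b]
  ext1 <;> simp only [Amap, AstarMap, Prod.smul_fst, Prod.smul_snd, smul_eq_mul] <;> ring

lemma AstarMap_Amap (u : ℂ × ℂ) :
    AstarMap a b (Amap a b u) = ((‖a‖ : ℂ) ^ 2 + (‖b‖ : ℂ) ^ 2) • u := by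
  rw [← Complex.mul_conj' a, ← Complex.mul_conj' b]
  ext1 <;> simp only [Amap, AstarMap, Prod.smul_fst, Prod.smul_snd, smul_eq_mul] <;> ring

lemma nsq_Amap (u : ℂ × ℂ) : nsq (Amap a b u) = (‖a‖ ^ 2 + ‖b‖ ^ 2) * nsq u := by
  apply Complex.ofReal_injective
  simp only [nsq, Amap, Complex.ofReal_add, Complex.ofReal_mul, Complex.ofReal_pow,
    ← Complex.mul_conj', map_add, map_mul, map_neg, Complex.conj_conj]
  ring

lemma semiconj_Amap_comp : Function.Semiconj (Amap a b ∘ ·) (qwStepV a b) (qwStep a b) := by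
  intro f
  rw [qwStepV_eq_spinShift_Amap_comp, qwStep_eq_Amap_comp_spinShift]

lemma qwStepV_AstarMap_comp (f : ℤ → ℂ × ℂ) :
    qwStepV a b (AstarMap a b ∘ f) = AstarMap a b ∘ qwStep a b f := by
  set c : ℂ := (‖a‖ : ℂ) ^ 2 + (‖b‖ : ℂ) ^ 2
  have hAAstar : Amap a b ∘ AstarMap a b ∘ f = c • f :=
    funext fun x => Amap_AstarMap a b (f x)
  have hAstarA : AstarMap a b ∘ Amap a b ∘ spinShift f = c • spinShift f :=
    funext fun x => AstarMap_Amap a b (spinShift f x)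
  rw [qwStepV_eq_spinShift_Amap_comp, qwStep_eq_Amap_comp_spinShift, hAAstar, hAstarA,
    spinShift_smul]

lemma Amap_comp_iterate_qwStepV_qwDelta (ψ : ℂ × ℂ) (n : ℕ) :
    Amap a b ∘ (qwStepV a b)^[n] (qwDelta ψ) = (qwStep a b)^[n] (qwDelta (Amap a b ψ)) := by
  rw [← comp_qwDelta (Amap_zero a b)]
  exact (semiconj_Amap_comp a b).iterate_right n (qwDelta ψ)

end Coin

theorem stmt5_general (a b : ℂ) :
    (∀ ψ : ℂ × ℂ, ∀ n : ℕ, ∀ x : ℤ,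
        qwP a b (Amap a b ψ) n x = (‖a‖ ^ 2 + ‖b‖ ^ 2) * qwQ a b ψ n x) ∧
    (∀ f : ℤ → ℂ × ℂ, ∀ x : ℤ,
        qwStepV a b (fun z => AstarMap a b (f z)) x = AstarMap a b (qwStep a b f x)) := by
  refine ⟨fun ψ n x => ?_, fun f x => congrFun (qwStepV_AstarMap_comp a b f) x⟩
  rw [qwP, qwQ, ← Amap_comp_iterate_qwStepV_qwDelta, Function.comp_apply, nsq_Amap]

/-- `q_n(ψ; x) = p_n(Aψ; x)` for every unit vector `ψ`, and
`V A* = A* U` where `A*` acts componentwise on `ℓ²(ℤ, ℂ²)`. -/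
theorem stmt5 (a b : ℂ) (hab1 : ‖a‖ ^ 2 + ‖b‖ ^ 2 = 1) (hab : a * b ≠ 0) :
    (∀ ψ : ℂ × ℂ, nsq ψ = 1 → ∀ n : ℕ, ∀ x : ℤ,
        qwQ a b ψ n x = qwP a b (Amap a b ψ) n x) ∧
    (∀ f : ℤ → ℂ × ℂ, ∀ x : ℤ,
        qwStepV a b (fun z => AstarMap a b (f z)) x = AstarMap a b (qwStep a b f x)) := by
  obtain ⟨hprob, hintertwine⟩ := stmt5_general a b
  exact ⟨fun ψ _ n x => by rw [hprob, hab1, one_mul], hintertwine⟩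
end
end

section
/- For every n ∈ ℕ, every y ∈ ℤ, every unit vector φ ∈ ℂ², every ψ ∈ ℂ², and every radius r > 0, the transition amplitude satisfies ⟨Uⁿ(δ₀ ⊗ φ), δ_y ⊗ ψ⟩_{ℓ²} = (1/2πi) ∮_{|z|=r} z^{−y−1} ⟨A(z)ⁿ φ, ψ⟩ dz, where A(z) = P z⁻¹ + Q z is the 2×2 matrix [[a z⁻¹, b z], [−conj(b) z⁻¹, conj(a) z]]. -/
/-!
The amplitudes of the walk are the Laurent coefficients of `z ↦ A(z)ⁿ φ`. Multiplying a function by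
`z⁻¹` or `z` shifts its Laurent coefficients by one site, so multiplying it by `A(z) = z⁻¹ P + z Q`
performs one step of the walk on them. The constant function `φ` has coefficients `δ₀ ⊗ φ`, and
induction on `n` concludes.
-/

open Filter Topology Asymptotics MeasureTheory

noncomputable section

/-- The standard inner product on `ℂ²`, conjugate-linear in the second argument
(the convention of the paper): `⟨u, v⟩ = u₁ conj(v₁) + u₂ conj(v₂)`. -/
def innC (u v : ℂ × ℂ) : ℂ :=
  u.1 * (starRingEnd ℂ) v.1 + u.2 * (starRingEnd ℂ) v.2

/-- The matrix `A(z) = P z⁻¹ + Q z = [[a z⁻¹, b z],[−conj(b) z⁻¹, conj(a) z]]` acting on `ℂ²`. -/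
def AzMap (a b : ℂ) (z : ℂ) (u : ℂ × ℂ) : ℂ × ℂ :=
  (a * z⁻¹ * u.1 + b * z * u.2,
   -(starRingEnd ℂ) b * z⁻¹ * u.1 + (starRingEnd ℂ) a * z * u.2)

section LaurentCoeff

variable {E F : Type*} [NormedAddCommGroup E] [NormedSpace ℂ E]
  [NormedAddCommGroup F] [NormedSpace ℂ F] {r : ℝ}

/-- The `k`-th Laurent coefficient `(1/2πi) ∮_{|z|=r} z^{-k-1} f(z) dz` of `f` at the origin,
computed on the circle of radius `r`; `f` need only be defined on that circle. -/
def laurentCoeff (r : ℝ) (f : ℂ → E) (k : ℤ) : E :=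
  (2 * Real.pi * Complex.I : ℂ)⁻¹ • ∮ z in C(0, r), z ^ (-k - 1) • f z

lemma circleIntegrable_zpow_smul (hr : 0 < r) {f : ℂ → E} (hf : CircleIntegrable f 0 r) (m : ℤ) :
    CircleIntegrable (fun z => z ^ m • f z) 0 r := by
  refine hf.continuousOn_smul (continuousOn_id.zpow₀ m fun z hz => Or.inl ?_)
  exact ne_zero_of_mem_sphere (abs_pos.2 hr.ne').ne' ⟨z, hz⟩

lemma circleIntegral_zpow_sub_one (hr : 0 < r) (k : ℤ) :
    (∮ z in C(0, r), z ^ (k - 1)) = if k = 0 then 2 * Real.pi * Complex.I else 0 := by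
  split_ifs with hk
  · simpa [hk] using circleIntegral.integral_sub_center_inv 0 hr.ne'
  · simpa using circleIntegral.integral_sub_zpow_of_ne (n := k - 1) (by lia) 0 0 r

lemma laurentCoeff_const [CompleteSpace E] (hr : 0 < r) (c : E) :
    laurentCoeff r (fun _ => c) = Pi.single 0 c := by
  ext k
  rw [laurentCoeff, circleIntegral.integral_smul_const, circleIntegral_zpow_sub_one hr]
  by_cases hk : k = 0
  · simp only [neg_eq_zero, hk, if_true, Pi.single_eq_same]
    exact inv_smul_smul₀ Complex.two_pi_I_ne_zero c
  · simp [hk]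

lemma laurentCoeff_add (hr : 0 < r) {f g : ℂ → E} (hf : CircleIntegrable f 0 r)
    (hg : CircleIntegrable g 0 r) :
    laurentCoeff r (fun z => f z + g z) = laurentCoeff r f + laurentCoeff r g := by
  ext k
  simp only [laurentCoeff, smul_add, Pi.add_apply]
  rw [circleIntegral.integral_add (circleIntegrable_zpow_smul hr hf _)
    (circleIntegrable_zpow_smul hr hg _), smul_add]

lemma laurentCoeff_zpow_smul (hr : 0 < r) (f : ℂ → E) (m k : ℤ) :
    laurentCoeff r (fun z => z ^ m • f z) k = laurentCoeff r f (k - m) := by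
  unfold laurentCoeff
  congr 1
  refine circleIntegral.integral_congr hr.le fun z hz => ?_
  have hz0 : z ≠ 0 := ne_zero_of_mem_sphere hr.ne' ⟨z, hz⟩
  simp only [smul_smul, ← zpow_add₀ hz0]
  congr 2
  ring

lemma circleIntegrable_clm_comp (L : E →L[ℂ] F) {f : ℂ → E} {c : ℂ} (hf : CircleIntegrable f c r) :
    CircleIntegrable (fun z => L (f z)) c r :=
  ⟨L.integrable_comp hf.1, L.integrable_comp hf.2⟩

lemma circleIntegral_clm_comp [CompleteSpace E] [CompleteSpace F] (L : E →L[ℂ] F) {f : ℂ → E}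
    {c : ℂ} (hf : CircleIntegrable f c r) :
    (∮ z in C(c, r), L (f z)) = L (∮ z in C(c, r), f z) := by
  simp only [circleIntegral, ← map_smul]
  exact L.intervalIntegral_comp_comm hf.out

lemma laurentCoeff_clm_comp [CompleteSpace E] [CompleteSpace F] (L : E →L[ℂ] F) (hr : 0 < r)
    {f : ℂ → E} (hf : CircleIntegrable f 0 r) (k : ℤ) :
    laurentCoeff r (fun z => L (f z)) k = L (laurentCoeff r f k) := by
  simp only [laurentCoeff, ← map_smul]
  rw [circleIntegral_clm_comp L (circleIntegrable_zpow_smul hr hf _), map_smul]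

end LaurentCoeff

section Walk

variable {E F : Type*} [NormedAddCommGroup E] [NormedSpace ℂ E]
  [NormedAddCommGroup F] [NormedSpace ℂ F] {r : ℝ}

/-- One step of the nearest-neighbour walk on `ℤ` with coin space `E`: the operator `P` moves
amplitudes one site to the left and `Q` moves them one site to the right. -/
def walkStep (P Q : E →L[ℂ] E) (f : ℤ → E) (x : ℤ) : E :=
  P (f (x + 1)) + Q (f (x - 1))

/-- The symbol `A(z) = z⁻¹ P + z Q` of the walk: the operator by which `walkStep P Q` acts on
generating functions `∑ₓ f(x) zˣ`. -/
def walkSymbol (P Q : E →L[ℂ] E) (z : ℂ) : E →L[ℂ] E :=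
  z⁻¹ • P + z • Q

lemma continuousOn_walkSymbol (P Q : E →L[ℂ] E) : ContinuousOn (walkSymbol P Q) {0}ᶜ :=
  (continuousOn_inv₀.smul continuousOn_const).add (continuousOn_id.smul continuousOn_const)

lemma circleIntegrable_walkSymbol_pow_apply (P Q : E →L[ℂ] E) (hr : 0 < r) (n : ℕ) (φ : E) :
    CircleIntegrable (fun z => (walkSymbol P Q z ^ n) φ) 0 r := by
  have hcont : ContinuousOn (fun z => (walkSymbol P Q z ^ n) φ) {0}ᶜ :=
    ((continuousOn_walkSymbol P Q).pow n).clm_apply continuousOn_const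
  exact (hcont.mono fun z hz => ne_zero_of_mem_sphere hr.ne' ⟨z, hz⟩).circleIntegrable hr.le

lemma laurentCoeff_walkSymbol_apply [CompleteSpace E] (P Q : E →L[ℂ] E) (hr : 0 < r) {f : ℂ → E}
    (hf : CircleIntegrable f 0 r) :
    laurentCoeff r (fun z => walkSymbol P Q z (f z)) = walkStep P Q (laurentCoeff r f) := by
  have hP := circleIntegrable_clm_comp P hf
  have hQ := circleIntegrable_clm_comp Q hf
  have hsymbol : (fun z => walkSymbol P Q z (f z)) =
      fun z => z ^ (-1 : ℤ) • P (f z) + z ^ (1 : ℤ) • Q (f z) := by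
    simp [walkSymbol]
  ext x
  rw [hsymbol, laurentCoeff_add hr (circleIntegrable_zpow_smul hr hP _)
      (circleIntegrable_zpow_smul hr hQ _), Pi.add_apply, laurentCoeff_zpow_smul hr,
    laurentCoeff_zpow_smul hr, laurentCoeff_clm_comp P hr hf, laurentCoeff_clm_comp Q hr hf,
    sub_neg_eq_add, walkStep]

theorem walkStep_iterate_single [CompleteSpace E] (P Q : E →L[ℂ] E) (hr : 0 < r) (n : ℕ) (φ : E) :
    (walkStep P Q)^[n] (Pi.single 0 φ) = laurentCoeff r fun z => (walkSymbol P Q z ^ n) φ := by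
  induction n with
  | zero => simp [laurentCoeff_const hr]
  | succ n ih =>
    simp only [Function.iterate_succ_apply', ih, pow_succ', mul_apply_eq_comp]
    exact (laurentCoeff_walkSymbol_apply P Q hr
      (circleIntegrable_walkSymbol_pow_apply P Q hr n φ)).symm

theorem stmt6_general [CompleteSpace E] [CompleteSpace F] (P Q : E →L[ℂ] E) (L : E →L[ℂ] F)
    (φ : E) (n : ℕ) (y : ℤ) (hr : 0 < r) :
    L ((walkStep P Q)^[n] (Pi.single 0 φ) y) =
      (2 * Real.pi * Complex.I : ℂ)⁻¹ •
        ∮ z in C(0, r), z ^ (-y - 1) • L ((walkSymbol P Q z ^ n) φ) := by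
  rw [walkStep_iterate_single P Q hr,
    ← laurentCoeff_clm_comp L hr (circleIntegrable_walkSymbol_pow_apply P Q hr n φ), laurentCoeff]

end Walk

section Coin

open scoped ComplexConjugate

/-- The first column `P = [[a, 0], [-conj b, 0]]` of the coin, as an operator on `ℂ²`. -/
def coinP (a b : ℂ) : ℂ × ℂ →L[ℂ] ℂ × ℂ :=
  (ContinuousLinearMap.fst ℂ ℂ ℂ).smulRight (a, -conj b)

/-- The second column `Q = [[0, b], [0, conj a]]` of the coin, as an operator on `ℂ²`. -/
def coinQ (a b : ℂ) : ℂ × ℂ →L[ℂ] ℂ × ℂ :=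
  (ContinuousLinearMap.snd ℂ ℂ ℂ).smulRight (b, conj a)

/-- The functional `⟨·, ψ⟩` on `ℂ²`, linear because `innC` is conjugate-linear in its second
argument. -/
def innCLeft (ψ : ℂ × ℂ) : ℂ × ℂ →L[ℂ] ℂ :=
  conj ψ.1 • ContinuousLinearMap.fst ℂ ℂ ℂ + conj ψ.2 • ContinuousLinearMap.snd ℂ ℂ ℂ

lemma innCLeft_apply (ψ u : ℂ × ℂ) : innCLeft ψ u = innC u ψ := by
  simp [innCLeft, innC, mul_comm]

lemma qwDelta_eq_single (φ : ℂ × ℂ) : qwDelta φ = Pi.single 0 φ := by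
  ext1 x
  simp [qwDelta, Pi.single_apply]

lemma qwStep_eq_walkStep (a b : ℂ) : qwStep a b = walkStep (coinP a b) (coinQ a b) := by
  ext f x <;> simp [qwStep, walkStep, coinP, coinQ, mul_comm]

lemma AzMap_eq_walkSymbol (a b z : ℂ) : AzMap a b z = walkSymbol (coinP a b) (coinQ a b) z := by
  ext u <;> simp [AzMap, walkSymbol, coinP, coinQ] <;> ring

end Coin

/-- the contour-integral formula for the transition amplitude:
`⟨Uⁿ(δ₀ ⊗ φ), δ_y ⊗ ψ⟩ = (1/2πi) ∮_{|z|=r} z^{−y−1} ⟨A(z)ⁿ φ, ψ⟩ dz` for every `r > 0`. -/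
theorem stmt6 (a b : ℂ) (hab1 : ‖a‖ ^ 2 + ‖b‖ ^ 2 = 1) (hab : a * b ≠ 0)
    (φ : ℂ × ℂ) (hφ : nsq φ = 1) (ψ : ℂ × ℂ) (n : ℕ) (y : ℤ) (r : ℝ) (hr : 0 < r) :
    innC (((qwStep a b)^[n] (qwDelta φ)) y) ψ =
      (2 * Real.pi * Complex.I)⁻¹ *
        ∮ z in C(0, r), z ^ (-y - 1) * innC ((AzMap a b z)^[n] φ) ψ := by
  simpa only [innCLeft_apply, qwDelta_eq_single, qwStep_eq_walkStep, AzMap_eq_walkSymbol,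
    FunLike.coe_pow_eq_iterate, smul_eq_mul] using
    stmt6_general (coinP a b) (coinQ a b) (innCLeft ψ) φ n y hr
end
end

section
/- For every z on the unit circle S¹ and every ψ ∈ ℂ², one has f_ψ(−z) = g_ψ(z). -/
/-!
Since `A(-ωz) = -A(ωz)` and `λ(-z) = -conj λ(z)`, the vector `u(-z)` is an eigenvector of the
unitary matrix `A(ωz)` for the eigenvalue `conj λ(z)`, whereas `u(z)` belongs to `λ(z)`. Hence
`u(-z)` and `u(z)` are orthogonal unit vectors of `ℂ²`. So `u(-z)` spans the same line as `J u(z)`,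
and `⟨φ, v⟩⟨v, ψ⟩` depends on the unit vector `v` only through the line it spans.
-/

open Filter Topology Asymptotics MeasureTheory

noncomputable section

/-- `φ̃(z) = (z + z⁻¹)/2`; on the unit circle this is real (`= Re z`). -/
def phit (z : ℂ) : ℝ := ((z + z⁻¹) / 2).re

/-- The eigenvalue `λ(z) = |a|φ̃(z) + i√(1 − |a|²φ̃(z)²)` of `A(ωz)`, for `z ∈ S¹`. -/
def lamS (a : ℂ) (z : ℂ) : ℂ :=
  ((‖a‖ * phit z : ℝ) : ℂ) +
    Complex.I * ((Real.sqrt (1 - ‖a‖ ^ 2 * phit z ^ 2) : ℝ) : ℂ)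

/-- The normalizing factor `p(z) = √(|b|² + |λ(z) − |a| conj z|²)`. -/
def pnormF (a b : ℂ) (z : ℂ) : ℝ :=
  Real.sqrt (‖b‖ ^ 2 + ‖lamS a z - (‖a‖ : ℂ) * (starRingEnd ℂ) z‖ ^ 2)

/-- The unit eigenvector `u(z) = (1/p(z)) ((ab/|a|)z, λ(z) − |a| conj z)ᵀ` of `A(ωz)`. -/
def uvec (a b : ℂ) (z : ℂ) : ℂ × ℂ :=
  (((pnormF a b z : ℝ) : ℂ)⁻¹ * (a * b / (‖a‖ : ℂ) * z),
   ((pnormF a b z : ℝ) : ℂ)⁻¹ * (lamS a z - (‖a‖ : ℂ) * (starRingEnd ℂ) z))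

/-- `Jψ = (−conj ψ₂, conj ψ₁)ᵀ`. -/
def Jmap (ψ : ℂ × ℂ) : ℂ × ℂ := (-(starRingEnd ℂ) ψ.2, (starRingEnd ℂ) ψ.1)

/-- `f_ψ(z) = ⟨φ, u(z)⟩⟨u(z), ψ⟩`. -/
def fpsi (a b : ℂ) (φ ψ : ℂ × ℂ) (z : ℂ) : ℂ :=
  innC φ (uvec a b z) * innC (uvec a b z) ψ

/-- `g_ψ(z) = ⟨φ, Ju(z)⟩⟨Ju(z), ψ⟩`. -/
def gpsi (a b : ℂ) (φ ψ : ℂ × ℂ) (z : ℂ) : ℂ :=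
  innC φ (Jmap (uvec a b z)) * innC (Jmap (uvec a b z)) ψ

open ComplexConjugate

section InnerProduct

lemma innC_conj_symm (u v : ℂ × ℂ) : conj (innC u v) = innC v u := by
  simp only [innC, map_add, map_mul, Complex.conj_conj]
  ring

lemma innC_self (u : ℂ × ℂ) : innC u u = nsq u := by
  simp [innC, nsq, Complex.mul_conj']

lemma nsq_smul (c : ℂ) (u : ℂ × ℂ) : nsq (c • u) = ‖c‖ ^ 2 * nsq u := by
  simp only [nsq, Prod.smul_fst, Prod.smul_snd, norm_smul]
  ring

lemma innC_smul_smul (c d : ℂ) (u v : ℂ × ℂ) :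
    innC (c • u) (d • v) = c * conj d * innC u v := by
  simp only [innC, Prod.smul_fst, Prod.smul_snd, smul_eq_mul, map_mul]
  ring

lemma innC_mul_innC_add_Jmap (u φ ψ : ℂ × ℂ) :
    innC φ u * innC u ψ + innC φ (Jmap u) * innC (Jmap u) ψ = nsq u * innC φ ψ := by
  rw [← innC_self]
  simp only [innC, Jmap, map_neg, Complex.conj_conj]
  ring

lemma innC_mul_innC_eq_Jmap_of_innC_eq_zero {u w : ℂ × ℂ} (hu : nsq u = 1) (hw : nsq w = 1)
    (huw : innC u w = 0) (φ ψ : ℂ × ℂ) :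
    innC φ w * innC w ψ = innC φ (Jmap u) * innC (Jmap u) ψ := by
  have hwu : innC w u = 0 := by rw [← innC_conj_symm, huw, map_zero]
  have hφ : innC φ (Jmap u) * innC (Jmap u) w = innC φ w := by
    simpa [hu, huw] using innC_mul_innC_add_Jmap u φ w
  have hψ : innC w (Jmap u) * innC (Jmap u) ψ = innC w ψ := by
    simpa [hu, hwu] using innC_mul_innC_add_Jmap u w ψ
  have phase : innC w (Jmap u) * innC (Jmap u) w = 1 := by
    simpa [hu, hw, huw, innC_self] using innC_mul_innC_add_Jmap u w w
  calc innC φ w * innC w ψ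
      = innC φ (Jmap u) * innC (Jmap u) ψ * (innC w (Jmap u) * innC (Jmap u) w) := by
        rw [← hφ, ← hψ]
        ring
    _ = innC φ (Jmap u) * innC (Jmap u) ψ := by rw [phase, mul_one]

end InnerProduct

section Eigenvalue

variable {a z : ℂ}

lemma phit_neg (z : ℂ) : phit (-z) = -phit z := by
  simp only [phit, inv_neg, ← neg_add, neg_div, Complex.neg_re]

lemma phit_eq_re (hz : ‖z‖ = 1) : phit z = z.re := by
  simp [phit, Complex.inv_eq_conj hz]

lemma lamS_neg (a z : ℂ) : lamS a (-z) = -conj (lamS a z) := by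
  simp [lamS, phit_neg, add_comm]

lemma lamS_add_conj (hz : ‖z‖ = 1) : lamS a z + conj (lamS a z) = ‖a‖ * (z + conj z) := by
  rw [Complex.add_conj, Complex.add_conj]
  simp only [lamS, phit_eq_re hz, Complex.add_re, Complex.ofReal_re, Complex.re_mul_ofReal,
    Complex.I_re, zero_mul, add_zero]
  push_cast
  ring

lemma lamS_mul_conj (ha : ‖a‖ ≤ 1) (hz : ‖z‖ = 1) : lamS a z * conj (lamS a z) = 1 := by
  have hre : |z.re| ≤ 1 := hz ▸ Complex.abs_re_le_norm z
  have hcos : 0 ≤ 1 - ‖a‖ ^ 2 * phit z ^ 2 := by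
    rw [phit_eq_re hz, ← mul_pow, sub_nonneg, sq_le_one_iff_abs_le_one, abs_mul, abs_norm]
    exact mul_le_one₀ ha (abs_nonneg _) hre
  rw [lamS, mul_comm Complex.I, Complex.mul_conj, Complex.normSq_add_mul_I, Real.sq_sqrt hcos]
  norm_cast
  ring

lemma lamS_sub_conj_mul_lamS_sub (ha : ‖a‖ ≤ 1) (hz : ‖z‖ = 1) :
    (lamS a z - ‖a‖ * conj z) * (lamS a z - ‖a‖ * z) = ‖a‖ ^ 2 - 1 := by
  have hzz : z * conj z = 1 := by simp [Complex.mul_conj', hz]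
  linear_combination lamS a z * lamS_add_conj (a := a) hz - lamS_mul_conj ha hz + ‖a‖ ^ 2 * hzz

end Eigenvalue

section Eigenvector

variable {a b z : ℂ}

/-- The eigenvector `((ab/|a|)z, λ(z) − |a| conj z)ᵀ` of `A(ωz)` before normalization, so that
`u(z) = p(z)⁻¹ • eigVec a b z`. -/
def eigVec (a b z : ℂ) : ℂ × ℂ := (a * b / ‖a‖ * z, lamS a z - ‖a‖ * conj z)

lemma uvec_eq_smul_eigVec (a b z : ℂ) :
    uvec a b z = (pnormF a b z : ℂ)⁻¹ • eigVec a b z := rfl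

lemma norm_eigVec_fst (ha : a ≠ 0) (hz : ‖z‖ = 1) : ‖(eigVec a b z).1‖ = ‖b‖ := by
  simp [eigVec, hz, ha]

lemma nsq_eigVec (ha : a ≠ 0) (hz : ‖z‖ = 1) : nsq (eigVec a b z) = pnormF a b z ^ 2 := by
  rw [nsq, norm_eigVec_fst ha hz, pnormF, Real.sq_sqrt (by positivity)]
  rfl

lemma pnormF_pos (a : ℂ) (hb : b ≠ 0) (z : ℂ) : 0 < pnormF a b z :=
  Real.sqrt_pos.mpr (by positivity)

lemma nsq_uvec (ha : a ≠ 0) (hb : b ≠ 0) (hz : ‖z‖ = 1) : nsq (uvec a b z) = 1 := by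
  have hp : pnormF a b z ≠ 0 := (pnormF_pos a hb z).ne'
  rw [uvec_eq_smul_eigVec, nsq_smul, nsq_eigVec ha hz, norm_inv, Complex.norm_real,
    Real.norm_eq_abs, inv_pow, sq_abs, inv_mul_cancel₀ (pow_ne_zero 2 hp)]

lemma innC_eigVec_neg (ha : a ≠ 0) (hab1 : ‖a‖ ^ 2 + ‖b‖ ^ 2 = 1) (hz : ‖z‖ = 1) :
    innC (eigVec a b z) (eigVec a b (-z)) = 0 := by
  have ha1 : ‖a‖ ≤ 1 := by nlinarith [sq_nonneg ‖b‖]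
  have hab1' : (‖a‖ : ℂ) ^ 2 + ‖b‖ ^ 2 = 1 := mod_cast hab1
  have hfst : (eigVec a b z).1 * conj (eigVec a b (-z)).1 = -‖b‖ ^ 2 := by
    rw [← norm_eigVec_fst ha hz, ← Complex.mul_conj']
    simp only [eigVec, mul_neg, map_neg]
  have hsnd : (eigVec a b z).2 * conj (eigVec a b (-z)).2 = 1 - ‖a‖ ^ 2 := by
    have hconj : conj (eigVec a b (-z)).2 = -(lamS a z - ‖a‖ * z) := by
      simp only [eigVec, lamS_neg, map_sub, map_neg, map_mul, Complex.conj_conj,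
        Complex.conj_ofReal]
      ring
    rw [hconj, mul_neg, eigVec, lamS_sub_conj_mul_lamS_sub ha1 hz, neg_sub]
  rw [innC, hfst, hsnd]
  linear_combination -hab1'

lemma innC_uvec_neg (ha : a ≠ 0) (hab1 : ‖a‖ ^ 2 + ‖b‖ ^ 2 = 1) (hz : ‖z‖ = 1) :
    innC (uvec a b z) (uvec a b (-z)) = 0 := by
  rw [uvec_eq_smul_eigVec, uvec_eq_smul_eigVec, innC_smul_smul, innC_eigVec_neg ha hab1 hz,
    mul_zero]

end Eigenvector

theorem stmt7_general {a b : ℂ} (hab1 : ‖a‖ ^ 2 + ‖b‖ ^ 2 = 1) (hab : a * b ≠ 0)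
    (φ : ℂ × ℂ) {z : ℂ} (hz : ‖z‖ = 1) (ψ : ℂ × ℂ) :
    fpsi a b φ ψ (-z) = gpsi a b φ ψ z := by
  obtain ⟨ha, hb⟩ := mul_ne_zero_iff.mp hab
  have hz' : ‖-z‖ = 1 := by rwa [norm_neg]
  exact innC_mul_innC_eq_Jmap_of_innC_eq_zero (nsq_uvec ha hb hz) (nsq_uvec ha hb hz')
    (innC_uvec_neg ha hab1 hz) φ ψ

/-- Lemma `GandF`: `f_ψ(−z) = g_ψ(z)` for every `z ∈ S¹` and every `ψ ∈ ℂ²`. -/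
theorem stmt7 (a b : ℂ) (hab1 : ‖a‖ ^ 2 + ‖b‖ ^ 2 = 1) (hab : a * b ≠ 0)
    (φ : ℂ × ℂ) (hφ : nsq φ = 1) :
    ∀ z : ℂ, ‖z‖ = 1 → ∀ ψ : ℂ × ℂ, fpsi a b φ ψ (-z) = gpsi a b φ ψ z :=
  fun _ hz ψ => stmt7_general hab1 hab φ hz ψ
end
end
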